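/- arXiv:2411.04683 — 3 statements merged into one kernel-verified Lean document; each statement's English description precedes it below -/
import Mathlib

section
/- Let Ω ⊂ ℂ be a bounded, open, simply connected set whose frontier Γ = ∂Ω equals the image of an injective, twice continuously differentiable map γ : S¹ → ℂ from the unit circle. Then there exist functions ξ, η : closure(Ω) → ℝ that are continuous on closure(Ω), harmonic on Ω, and satisfy the boundary conditions ξ(γ(e^{iθ})) = cos θ and η(γ(e^{iθ})) = sin θ for all θ ∈ [0, 2π); equivalently, there exists a map g = ξ + iη : closure(Ω) → ℂ, continuous on closure(Ω), with harmonic real and imaginary parts on Ω, such that g(γ(z)) = z for all z ∈ S¹. -/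
open Complex Metric Set

/-- A real-valued function on `ℂ ≅ ℝ²` is harmonic on an open set `U` if it is twice
continuously differentiable on `U` and its Laplacian vanishes identically on `U`. -/
def HarmonicOnSet (f : ℂ → ℝ) (U : Set ℂ) : Prop :=
  ContDiffOn ℝ 2 f U ∧
    ∀ p ∈ U,
      fderiv ℝ (fun z => fderiv ℝ f z 1) p 1 +
        fderiv ℝ (fun z => fderiv ℝ f z Complex.I) p Complex.I = 0


section Aux

open Filter Topology InnerProductSpace Real MeasureTheory

/-- The Poisson integral of `g` over the circle. -/
noncomputable def poissonInt (g : ℂ → ℝ) (c : ℂ) (R : ℝ) (w : ℂ) : ℝ :=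
  circleAverage (poissonKernel c w • g) c R

lemma poissonKernel_continuousOn {c w : ℂ} {R : ℝ} (hw : w ∈ ball c R) :
    ContinuousOn (poissonKernel c w) (sphere c R) := by
  have hR : 0 < R := pos_of_mem_ball hw
  have h := continuousOn_herglotzRieszKernel_sphere hw
  rw [abs_of_pos hR] at h
  rw [poissonKernel_eq_re_herglotzRieszKernel]
  exact Complex.continuous_re.comp_continuousOn h

lemma poissonInt_harmonic {g : ℂ → ℝ} {c : ℂ} {R : ℝ}
    (hg : ContinuousOn g (sphere c R)) : HarmonicOnNhd (poissonInt g c R) (ball c R) := by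
  intro w hw
  have hR : 0 < R := pos_of_mem_ball hw
  set g' : ℂ → ℝ := fun z => g (z + c) with hg'
  have hg'c : ContinuousOn g' (sphere 0 R) := by
    apply hg.comp (by fun_prop)
    intro z hz; simpa using hz
  have hgi : CircleIntegrable g' 0 R := hg'c.circleIntegrable hR.le
  have hgi2 : CircleIntegrable (fun z => (g' z : ℂ)) 0 R :=
    ContinuousOn.circleIntegrable hR.le (Complex.continuous_ofReal.comp_continuousOn hg'c)
  have han := analyticOnNhd_circleAverage_herglotzRieszKernel_smul hgi2
  have hw0 : w - c ∈ ball (0 : ℂ) R := by simpa [dist_eq_norm] using hw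
  have h1 : AnalyticAt ℂ (fun w => circleAverage
      (fun ζ ↦ herglotzRieszKernel 0 (w - c) ζ • (g' ζ : ℂ)) 0 R) w := by
    have := han _ hw0
    exact AnalyticAt.fun_comp (f := fun w : ℂ => w - c) (g := fun w => circleAverage
      (fun ζ ↦ herglotzRieszKernel 0 w ζ • (g' ζ : ℂ)) 0 R) this (by fun_prop)
  have h2 := h1.harmonicAt_re
  refine (harmonicAt_congr_nhds ?_).1 h2
  filter_upwards [isOpen_ball.mem_nhds hw] with v hv
  have hv0 : v - c ∈ ball (0 : ℂ) R := by simpa [dist_eq_norm] using hv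
  rw [re_circleAverage_herglotzRieszKernel_smul hgi hv0]
  unfold poissonInt
  rw [← circleAverage_map_add_const (c := c)]
  congr 1
  ext z
  simp [poissonKernel_eq_re_herglotzRieszKernel, herglotzRieszKernel_add_const, hg']

lemma poissonInt_integrable {g : ℂ → ℝ} {c w : ℂ} {R : ℝ}
    (hg : ContinuousOn g (sphere c R)) (hw : w ∈ ball c R) :
    CircleIntegrable (poissonKernel c w • g) c R :=
  ContinuousOn.circleIntegrable (pos_of_mem_ball hw).le ((poissonKernel_continuousOn hw).smul hg)

lemma poissonInt_const (a : ℝ) {c w : ℂ} {R : ℝ} (hw : w ∈ ball c R) :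
    poissonInt (fun _ => a) c R w = a :=
  HarmonicOnNhd.circleAverage_poissonKernel_smul (harmonicOnNhd_const a) hw

lemma poissonInt_center (g : ℂ → ℝ) {c : ℂ} {R : ℝ} (hR : 0 < R) :
    poissonInt g c R c = circleAverage g c R := by
  apply circleAverage_congr_sphere
  intro z hz
  rw [abs_of_pos hR, mem_sphere, dist_eq_norm] at hz
  simp [poissonKernel, hz, hR.ne']

lemma poissonInt_sub {g₁ g₂ : ℂ → ℝ} {c w : ℂ} {R : ℝ} (h₁ : ContinuousOn g₁ (sphere c R))
    (h₂ : ContinuousOn g₂ (sphere c R)) (hw : w ∈ ball c R) :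
    poissonInt (fun z => g₁ z - g₂ z) c R w = poissonInt g₁ c R w - poissonInt g₂ c R w := by
  unfold poissonInt
  rw [← circleAverage_sub (poissonInt_integrable h₁ hw) (poissonInt_integrable h₂ hw)]
  congr 1
  ext z
  simp [mul_sub]

lemma poissonKernel_nonneg' {c w z : ℂ} {R : ℝ} (hw : w ∈ ball c R) (hz : z ∈ sphere c R) :
    0 ≤ poissonKernel c w z := by
  rw [mem_ball, dist_eq_norm] at hw
  rw [mem_sphere, dist_eq_norm] at hz
  unfold poissonKernel
  rw [hz]
  have := norm_nonneg (w - c)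
  apply div_nonneg _ (by positivity)
  nlinarith

/-- Harnack upper bound on the half disc. -/
lemma poissonInt_harnack {g : ℂ → ℝ} {c w : ℂ} {R : ℝ} (hR : 0 < R)
    (hg : ContinuousOn g (sphere c R)) (hg0 : ∀ z ∈ sphere c R, 0 ≤ g z)
    (hw : w ∈ closedBall c (R / 2)) :
    poissonInt g c R w ≤ 3 * circleAverage g c R := by
  have hw' : w ∈ ball c R := closedBall_subset_ball (by linarith) hw
  rw [← smul_eq_mul, ← circleAverage_smul]
  apply circleAverage_mono (poissonInt_integrable hg hw')
  · exact ContinuousOn.circleIntegrable hR.le (hg.const_smul (3 : ℝ))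
  · intro z hz
    rw [abs_of_pos hR] at hz
    have h1 := re_herglotzRieszKernel_le hz hw'
    have h2 : poissonKernel c w z ≤ 3 := by
      rw [poissonKernel_eq_re_herglotzRieszKernel]
      refine h1.trans ?_
      rw [mem_closedBall, dist_eq_norm] at hw
      rw [div_le_iff₀ (by linarith)]
      linarith
    exact mul_le_mul_of_nonneg_right h2 (hg0 z hz)

/-- Boundary continuity of the Poisson integral. -/
lemma poissonInt_boundary {g : ℂ → ℝ} {c ζ₀ : ℂ} {R : ℝ} (hR : 0 < R)
    (hg : ContinuousOn g (sphere c R)) (hζ : ζ₀ ∈ sphere c R) :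
    Tendsto (poissonInt g c R) (𝓝[ball c R] ζ₀) (𝓝 (g ζ₀)) := by
  obtain ⟨M, hM⟩ := (isCompact_sphere c R).exists_bound_of_continuousOn hg
  have hM0 : 0 ≤ M := (norm_nonneg _).trans (hM ζ₀ hζ)
  rw [Metric.tendsto_nhds]
  intro ε hε
  obtain ⟨δ, hδ, hδg⟩ := Metric.continuousWithinAt_iff.1 (hg ζ₀ hζ) (ε / 2) (by linarith)
  have hlim : Tendsto (fun w : ℂ => 8 * M * (R ^ 2 - ‖w - c‖ ^ 2) / δ ^ 2) (𝓝[ball c R] ζ₀)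
      (𝓝 0) := by
    have : ContinuousAt (fun w : ℂ => 8 * M * (R ^ 2 - ‖w - c‖ ^ 2) / δ ^ 2) ζ₀ := by fun_prop
    have h := this.tendsto
    rw [mem_sphere, dist_eq_norm] at hζ
    simp only [hζ, sub_self, mul_zero, zero_div] at h
    exact h.mono_left nhdsWithin_le_nhds
  filter_upwards [hlim.eventually (gt_mem_nhds (show (0:ℝ) < ε / 2 by linarith)),
    self_mem_nhdsWithin, mem_nhdsWithin_of_mem_nhds (ball_mem_nhds ζ₀ (half_pos hδ))]
    with w hw1 hw hw2
  have hconst : ContinuousOn (fun _ : ℂ => g ζ₀) (sphere c R) := continuousOn_const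
  rw [Real.dist_eq, ← poissonInt_const (g ζ₀) hw, ← poissonInt_sub hg hconst hw]
  have hw' := hw
  rw [mem_ball, dist_eq_norm] at hw'
  have hpos : 0 ≤ R ^ 2 - ‖w - c‖ ^ 2 := by nlinarith [norm_nonneg (w - c)]
  set B := 8 * M * (R ^ 2 - ‖w - c‖ ^ 2) / δ ^ 2 with hB
  have hB0 : 0 ≤ B := by positivity
  have hpt : ∀ z ∈ sphere c R, |poissonKernel c w z * (g z - g ζ₀)| ≤
      (ε / 2) * poissonKernel c w z + B := by
    intro z hz
    have hP := poissonKernel_nonneg' hw hz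
    rw [abs_mul, abs_of_nonneg hP]
    by_cases hzd : dist z ζ₀ < δ
    · have := hδg hz hzd
      rw [Real.dist_eq] at this
      nlinarith
    · have h1 : |g z - g ζ₀| ≤ 2 * M := by
        have a1 := hM z hz
        have a2 := hM ζ₀ hζ
        rw [Real.norm_eq_abs] at a1 a2
        have := abs_sub (g z) (g ζ₀)
        linarith
      have h2 : δ / 2 ≤ ‖z - w‖ := by
        rw [mem_ball] at hw2
        have := dist_triangle z w ζ₀
        rw [← dist_eq_norm]
        linarith
      have h3 : poissonKernel c w z ≤ 4 * (R ^ 2 - ‖w - c‖ ^ 2) / δ ^ 2 := by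
        unfold poissonKernel
        rw [mem_sphere, dist_eq_norm] at hz
        rw [hz, sub_sub_sub_cancel_right]
        rw [div_le_div_iff₀ (by nlinarith) (by positivity)]
        have : δ ^ 2 ≤ 4 * ‖z - w‖ ^ 2 := by nlinarith
        nlinarith
      calc poissonKernel c w z * |g z - g ζ₀| ≤ (4 * (R ^ 2 - ‖w - c‖ ^ 2) / δ ^ 2) * (2 * M) := by
            gcongr
        _ = B := by rw [hB]; ring
        _ ≤ _ := by nlinarith
  have hitg := poissonInt_integrable (hg.sub hconst) hw
  have hintP : CircleIntegrable (fun z => (ε / 2) * poissonKernel c w z + B) c R :=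
    ContinuousOn.circleIntegrable hR.le
      (((poissonKernel_continuousOn hw).const_smul (ε / 2)).add continuousOn_const)
  have hvalue : circleAverage (fun z => (ε / 2) * poissonKernel c w z + B) c R = ε / 2 + B := by
    have hi1 : CircleIntegrable (fun z => (ε / 2) * poissonKernel c w z) c R :=
      ContinuousOn.circleIntegrable hR.le ((poissonKernel_continuousOn hw).const_smul (ε / 2))
    have hi2 : CircleIntegrable (fun _ => B) c R := circleIntegrable_const B c R
    rw [circleAverage_fun_add hi1 hi2, circleAverage_const]
    congr 1
    refine Eq.trans ?_ (poissonInt_const (ε / 2) hw)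
    unfold poissonInt
    congr 1
    ext z
    simp [mul_comm]
  have hle : |poissonInt (fun z => g z - g ζ₀) c R w| ≤ ε / 2 + B := by
    rw [← hvalue]
    refine abs_circleAverage_le_circleAverage_abs.trans ?_
    refine circleAverage_mono hitg.abs hintP ?_
    intro z hz
    rw [abs_of_pos hR] at hz
    simpa using hpt z hz
  have : B < ε / 2 := hw1
  linarith

lemma circleAverage_lt_of_le {v : ℂ → ℝ} {p : ℂ} {r m : ℝ} (hr : 0 < r)
    (hv : ContinuousOn v (sphere p r)) (hle : ∀ z ∈ sphere p r, v z ≤ m) (hlt : v (p + r) < m) :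
    circleAverage v p r < m := by
  have hcont : Continuous (fun θ : ℝ => m - v (circleMap p r θ)) := by
    refine continuous_const.sub ?_
    exact hv.comp_continuous (continuous_circleMap p r)
      (fun θ => circleMap_mem_sphere p hr.le θ)
  have hpos : 0 < ∫ θ in (0 : ℝ)..2 * π, (m - v (circleMap p r θ)) := by
    apply intervalIntegral.integral_pos two_pi_pos hcont.continuousOn
    · intro θ _
      exact sub_nonneg.2 (hle _ (circleMap_mem_sphere p hr.le θ))
    · refine ⟨0, ⟨le_rfl, two_pi_pos.le⟩, ?_⟩
      simpa [circleMap] using hlt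
  have h1 : 0 < circleAverage (fun z => m - v z) p r := by
    rw [circleAverage_def, smul_eq_mul]
    have := two_pi_pos
    positivity
  rw [circleAverage_fun_sub (circleIntegrable_const m p r) (hv.circleIntegrable hr.le),
    circleAverage_const] at h1
  linarith

/-- Maximum principle on a compact set. -/
lemma max_principle {K : Set ℂ} (hK : IsCompact K) {v : ℂ → ℝ} (hv : ContinuousOn v K) (C : ℝ)
    (h : ∀ p ∈ K, C < v p → ∀ᶠ r in 𝓝[>] (0 : ℝ), sphere p r ⊆ K ∧ v p ≤ circleAverage v p r) :
    ∀ p ∈ K, v p ≤ C := by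
  intro p₀ hp₀
  by_contra! hC
  obtain ⟨q, hqK, hq⟩ := hK.exists_isMaxOn ⟨p₀, hp₀⟩ hv
  have hq' : ∀ z ∈ K, v z ≤ v q := fun z hz => hq hz
  have hS : IsCompact (K ∩ v ⁻¹' {v q}) :=
    hK.of_isClosed_subset (hv.preimage_isClosed_of_isClosed hK.isClosed isClosed_singleton)
      inter_subset_left
  obtain ⟨p, ⟨hpK, hpq⟩, hp⟩ := hS.exists_isMaxOn ⟨q, hqK, rfl⟩
    Complex.continuous_re.continuousOn
  have hpq' : v p = v q := hpq
  obtain ⟨r, ⟨hsub, hle⟩, hr⟩ :=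
    ((h p hpK (by rw [hpq']; exact hC.trans_le (hq' p₀ hp₀))).and self_mem_nhdsWithin).exists
  have hr' : 0 < r := hr
  have hmem : p + r ∈ sphere p r := by simp [hr'.le]
  have hlt : v (p + r) < v q := by
    refine lt_of_le_of_ne (hq' _ (hsub hmem)) fun heq => ?_
    have : (p + r).re ≤ p.re := hp ⟨hsub hmem, heq⟩
    simp at this
    linarith
  have := circleAverage_lt_of_le hr' (hv.mono hsub) (fun z hz => hq' z (hsub hz)) hlt
  linarith

/-- Continuous subharmonic functions on `Ω`, via the local submean inequality. -/
def IsSub (v : ℂ → ℝ) (Ω : Set ℂ) : Prop :=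
  ContinuousOn v Ω ∧ ∀ w ∈ Ω, ∀ᶠ r in 𝓝[>] (0 : ℝ), v w ≤ circleAverage v w r

lemma eventually_closedBall_sub {Ω : Set ℂ} (hΩ : IsOpen Ω) {w : ℂ} (hw : w ∈ Ω) :
    ∀ᶠ r in 𝓝[>] (0 : ℝ), 0 < r ∧ closedBall w r ⊆ Ω := by
  obtain ⟨ε, hε, hb⟩ := Metric.isOpen_iff.1 hΩ w hw
  filter_upwards [Ioo_mem_nhdsGT hε] with r hr
  exact ⟨hr.1, (closedBall_subset_ball hr.2).trans hb⟩

lemma eventually_sphere {Ω : Set ℂ} (hΩ : IsOpen Ω) {w : ℂ} (hw : w ∈ Ω) :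
    ∀ᶠ r in 𝓝[>] (0 : ℝ), 0 < r ∧ sphere w r ⊆ Ω := by
  filter_upwards [eventually_closedBall_sub hΩ hw] with r hr
  exact ⟨hr.1, sphere_subset_closedBall.trans hr.2⟩

lemma integrable_of_sphere {Ω : Set ℂ} {v : ℂ → ℝ} (hv : ContinuousOn v Ω) {w : ℂ} {r : ℝ}
    (hr : 0 < r ∧ sphere w r ⊆ Ω) : CircleIntegrable v w r :=
  (hv.mono hr.2).circleIntegrable hr.1.le

lemma avg_mono_of_sphere {Ω : Set ℂ} {v u : ℂ → ℝ} (hv : ContinuousOn v Ω)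
    (hu : ContinuousOn u Ω) (hle : ∀ z ∈ Ω, v z ≤ u z) {w : ℂ} {r : ℝ}
    (hr : 0 < r ∧ sphere w r ⊆ Ω) : circleAverage v w r ≤ circleAverage u w r :=
  circleAverage_mono (integrable_of_sphere hv hr) (integrable_of_sphere hu hr)
    (fun z hz => by rw [abs_of_pos hr.1] at hz; exact hle z (hr.2 hz))

lemma isSub_const (a : ℝ) (Ω : Set ℂ) : IsSub (fun _ => a) Ω :=
  ⟨continuousOn_const, fun w _ => Eventually.of_forall fun r => by
    rw [circleAverage_const]⟩

lemma IsSub.sup_fun {Ω : Set ℂ} (hΩ : IsOpen Ω) {v u : ℂ → ℝ} (hv : IsSub v Ω) (hu : IsSub u Ω) :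
    IsSub (fun z => max (v z) (u z)) Ω := by
  have hc : ContinuousOn (fun z => max (v z) (u z)) Ω := hv.1.sup hu.1
  refine ⟨hc, fun w hw => ?_⟩
  filter_upwards [hv.2 w hw, hu.2 w hw, eventually_sphere hΩ hw] with r h1 h2 hr
  exact max_le (h1.trans (avg_mono_of_sphere hv.1 hc (fun z _ => le_max_left _ _) hr))
    (h2.trans (avg_mono_of_sphere hu.1 hc (fun z _ => le_max_right _ _) hr))

lemma IsSub.add {Ω : Set ℂ} (hΩ : IsOpen Ω) {v u : ℂ → ℝ} (hv : IsSub v Ω) (hu : IsSub u Ω) :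
    IsSub (fun z => v z + u z) Ω := by
  refine ⟨hv.1.add hu.1, fun w hw => ?_⟩
  filter_upwards [hv.2 w hw, hu.2 w hw, eventually_sphere hΩ hw] with r h1 h2 hr
  rw [circleAverage_fun_add (integrable_of_sphere hv.1 hr) (integrable_of_sphere hu.1 hr)]
  linarith

lemma IsSub.const_mul {Ω : Set ℂ} {v : ℂ → ℝ} (hv : IsSub v Ω) {a : ℝ} (ha : 0 ≤ a) :
    IsSub (fun z => a * v z) Ω := by
  refine ⟨hv.1.const_smul a, fun w hw => ?_⟩
  filter_upwards [hv.2 w hw] with r h1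
  have : circleAverage (fun z => a * v z) w r = a * circleAverage v w r :=
    circleAverage_fun_smul (a := a)
  rw [this]
  exact mul_le_mul_of_nonneg_left h1 ha

lemma harmonic_isSub {Ω : Set ℂ} (hΩ : IsOpen Ω) {v : ℂ → ℝ} (hv : HarmonicOnNhd v Ω) :
    IsSub v Ω := by
  refine ⟨hv.continuousOn, fun w hw => ?_⟩
  filter_upwards [eventually_closedBall_sub hΩ hw] with r hr
  rw [InnerProductSpace.HarmonicOnNhd.circleAverage_eq]
  rw [abs_of_pos hr.1]
  exact hv.mono hr.2

lemma IsSub.congr {Ω : Set ℂ} (hΩ : IsOpen Ω) {v u : ℂ → ℝ} (hv : IsSub v Ω)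
    (h : ∀ z ∈ Ω, u z = v z) : IsSub u Ω := by
  have hc : ContinuousOn u Ω := hv.1.congr h
  refine ⟨hc, fun w hw => ?_⟩
  filter_upwards [hv.2 w hw, eventually_sphere hΩ hw] with r h1 hr
  rw [h w hw]
  exact h1.trans (avg_mono_of_sphere hv.1 hc (fun z hz => (h z hz).ge) hr)

/-- Maximum principle in `Ω`. -/
lemma IsSub.le_of_compact {Ω : Set ℂ} (hΩ : IsOpen Ω) {v : ℂ → ℝ} (hv : IsSub v Ω) {K : Set ℂ}
    (hK : IsCompact K) (hKΩ : K ⊆ Ω) {C : ℝ} (hC : ∀ z ∈ Ω, z ∉ K → v z ≤ C) :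
    ∀ z ∈ Ω, v z ≤ C := by
  obtain ⟨δ, hδ, hsub⟩ := hK.exists_cthickening_subset_open hΩ hKΩ
  have hK' : IsCompact (cthickening δ K) := hK.cthickening
  have key := max_principle hK' (hv.1.mono hsub) C (by
    intro p hp hCp
    have hpK : p ∈ K := by
      by_contra hpK
      exact absurd (hC p (hsub hp) hpK) (not_le.2 hCp)
    filter_upwards [hv.2 p (hsub hp), Ioo_mem_nhdsGT hδ] with r h1 hr
    refine ⟨fun z hz => ?_, h1⟩
    apply mem_cthickening_of_dist_le z p δ K hpK
    rw [mem_sphere] at hz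
    rw [hz]
    exact hr.2.le)
  intro z hz
  by_cases hzK : z ∈ K
  · exact key z (self_subset_cthickening K hzK)
  · exact hC z hz hzK

open Classical in
/-- Poisson modification. -/
noncomputable def pmod (v : ℂ → ℝ) (c : ℂ) (R : ℝ) (w : ℂ) : ℝ :=
  if w ∈ ball c R then poissonInt v c R w else v w

lemma pmod_of_mem {v : ℂ → ℝ} {c w : ℂ} {R : ℝ} (h : w ∈ ball c R) :
    pmod v c R w = poissonInt v c R w := if_pos h

lemma pmod_of_not_mem {v : ℂ → ℝ} {c w : ℂ} {R : ℝ} (h : w ∉ ball c R) :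
    pmod v c R w = v w := if_neg h

lemma pmod_harmonic {v : ℂ → ℝ} {c : ℂ} {R : ℝ} (hv : ContinuousOn v (sphere c R)) :
    HarmonicOnNhd (pmod v c R) (ball c R) := by
  intro w hw
  refine (harmonicAt_congr_nhds ?_).1 (poissonInt_harmonic hv w hw)
  filter_upwards [isOpen_ball.mem_nhds hw] with z hz
  rw [pmod_of_mem hz]

lemma pmod_continuousOn {Ω : Set ℂ} (hΩ : IsOpen Ω) {v : ℂ → ℝ} (hv : ContinuousOn v Ω)
    {c : ℂ} {R : ℝ} (hR : 0 < R) (hb : closedBall c R ⊆ Ω) : ContinuousOn (pmod v c R) Ω := by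
  have hvs := hv.mono (sphere_subset_closedBall.trans hb)
  intro w hw
  apply ContinuousAt.continuousWithinAt
  by_cases h1 : w ∈ ball c R
  · exact (pmod_harmonic hvs w h1).1.continuousAt
  have hva : ContinuousAt v w := hv.continuousAt (hΩ.mem_nhds hw)
  by_cases h2 : w ∈ closedBall c R
  · have h3 : w ∈ sphere c R := by
      rw [mem_sphere]; rw [mem_closedBall] at h2; rw [mem_ball] at h1; linarith
    have ht := poissonInt_boundary hR hvs h3
    have hu : (𝓝 w) = 𝓝[ball c R] w ⊔ 𝓝[(ball c R)ᶜ] w := by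
      rw [← nhdsWithin_union, union_compl_self, nhdsWithin_univ]
    unfold ContinuousAt
    rw [pmod_of_not_mem h1, hu]
    refine Tendsto.sup ?_ ?_
    · refine ht.congr' ?_
      filter_upwards [self_mem_nhdsWithin] with z hz
      rw [pmod_of_mem hz]
    · refine (hva.tendsto.mono_left nhdsWithin_le_nhds).congr' ?_
      filter_upwards [self_mem_nhdsWithin] with z hz
      rw [pmod_of_not_mem hz]
  · refine hva.congr ?_
    filter_upwards [isClosed_closedBall.isOpen_compl.mem_nhds h2] with z hz
    rw [pmod_of_not_mem (fun h => hz (ball_subset_closedBall h))]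

lemma le_pmod {Ω : Set ℂ} (hΩ : IsOpen Ω) {v : ℂ → ℝ} (hv : IsSub v Ω)
    {c : ℂ} {R : ℝ} (hR : 0 < R) (hb : closedBall c R ⊆ Ω) (z : ℂ) : v z ≤ pmod v c R z := by
  have hvs := hv.1.mono (sphere_subset_closedBall.trans hb)
  have hmc := pmod_continuousOn hΩ hv.1 hR hb
  by_cases hz : z ∈ ball c R
  swap
  · rw [pmod_of_not_mem hz]
  have key := max_principle (isCompact_closedBall c R) (v := fun z => v z - pmod v c R z)
    ((hv.1.sub hmc).mono hb) 0 (by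
    intro p hp hpos
    have hpb : p ∈ ball c R := by
      by_contra h
      rw [pmod_of_not_mem h] at hpos
      simp at hpos
    filter_upwards [hv.2 p (hb hp), eventually_closedBall_sub isOpen_ball hpb] with r h1 hr
    have hsb : sphere p r ⊆ closedBall c R :=
      (sphere_subset_closedBall.trans hr.2).trans ball_subset_closedBall
    refine ⟨hsb, ?_⟩
    have hs : 0 < r ∧ sphere p r ⊆ Ω := ⟨hr.1, hsb.trans hb⟩
    rw [circleAverage_fun_sub (integrable_of_sphere hv.1 hs) (integrable_of_sphere hmc hs)]
    have : circleAverage (pmod v c R) p r = pmod v c R p := by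
      apply HarmonicOnNhd.circleAverage_eq
      rw [abs_of_pos hr.1]
      exact (pmod_harmonic hvs).mono hr.2
    rw [this]
    linarith)
  have := key z (ball_subset_closedBall hz)
  linarith

lemma pmod_isSub {Ω : Set ℂ} (hΩ : IsOpen Ω) {v : ℂ → ℝ} (hv : IsSub v Ω)
    {c : ℂ} {R : ℝ} (hR : 0 < R) (hb : closedBall c R ⊆ Ω) : IsSub (pmod v c R) Ω := by
  have hvs := hv.1.mono (sphere_subset_closedBall.trans hb)
  have hmc := pmod_continuousOn hΩ hv.1 hR hb
  refine ⟨hmc, fun w hw => ?_⟩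
  by_cases h : w ∈ ball c R
  · exact (harmonic_isSub isOpen_ball (pmod_harmonic hvs)).2 w h
  · filter_upwards [hv.2 w hw, eventually_sphere hΩ hw] with r h1 hr
    rw [pmod_of_not_mem h]
    exact h1.trans (avg_mono_of_sphere hv.1 hmc (fun z _ => le_pmod hΩ hv hR hb z) hr)

/-- The Perron family. -/
def PF (Ω : Set ℂ) (f v : ℂ → ℝ) : Prop :=
  IsSub v Ω ∧ ∃ K, IsCompact K ∧ K ⊆ Ω ∧ ∀ z ∈ Ω, z ∉ K → v z ≤ f z

/-- The Perron solution. -/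
noncomputable def per (Ω : Set ℂ) (f : ℂ → ℝ) (z : ℂ) : ℝ :=
  sSup {x | ∃ v, PF Ω f v ∧ x = v z}

lemma PF.bound {Ω : Set ℂ} (hΩ : IsOpen Ω) {f v : ℂ → ℝ} {M : ℝ} (hM : ∀ z ∈ Ω, |f z| ≤ M)
    (hv : PF Ω f v) : ∀ z ∈ Ω, v z ≤ M := by
  obtain ⟨hs, K, hK, hKΩ, hle⟩ := hv
  exact hs.le_of_compact hΩ hK hKΩ fun z hz hzK => (hle z hz hzK).trans (abs_le.1 (hM z hz)).2

lemma PF.sup_fun {Ω : Set ℂ} (hΩ : IsOpen Ω) {f v u : ℂ → ℝ} (hv : PF Ω f v) (hu : PF Ω f u) :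
    PF Ω f (fun z => max (v z) (u z)) := by
  obtain ⟨hs, K, hK, hKΩ, hle⟩ := hv
  obtain ⟨hs', K', hK', hKΩ', hle'⟩ := hu
  refine ⟨hs.sup_fun hΩ hs', K ∪ K', hK.union hK', union_subset hKΩ hKΩ', fun z hz hzK => ?_⟩
  rw [mem_union, not_or] at hzK
  exact max_le (hle z hz hzK.1) (hle' z hz hzK.2)

lemma PF.pmod {Ω : Set ℂ} (hΩ : IsOpen Ω) {f v : ℂ → ℝ} (hv : PF Ω f v)
    {c : ℂ} {R : ℝ} (hR : 0 < R) (hb : closedBall c R ⊆ Ω) : PF Ω f (pmod v c R) := by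
  obtain ⟨hs, K, hK, hKΩ, hle⟩ := hv
  refine ⟨pmod_isSub hΩ hs hR hb, K ∪ closedBall c R, hK.union (isCompact_closedBall c R),
    union_subset hKΩ hb, fun z hz hzK => ?_⟩
  rw [mem_union, not_or] at hzK
  rw [pmod_of_not_mem (fun h => hzK.2 (ball_subset_closedBall h))]
  exact hle z hz hzK.1

lemma PF_const {Ω : Set ℂ} {f : ℂ → ℝ} {M : ℝ} (hM : ∀ z ∈ Ω, |f z| ≤ M) :
    PF Ω f (fun _ => -M) :=
  ⟨isSub_const _ _, ∅, isCompact_empty, empty_subset _, fun z hz _ => (abs_le.1 (hM z hz)).1⟩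

lemma le_per {Ω : Set ℂ} (hΩ : IsOpen Ω) {f v : ℂ → ℝ} {M : ℝ} (hM : ∀ z ∈ Ω, |f z| ≤ M)
    (hv : PF Ω f v) {z : ℂ} (hz : z ∈ Ω) : v z ≤ per Ω f z := by
  refine le_csSup ⟨M, ?_⟩ ⟨v, hv, rfl⟩
  rintro x ⟨u, hu, rfl⟩
  exact hu.bound hΩ hM z hz

lemma per_le {Ω : Set ℂ} {f : ℂ → ℝ} {M : ℝ} (hM : ∀ z ∈ Ω, |f z| ≤ M)
    {z : ℂ} {C : ℝ} (h : ∀ v, PF Ω f v → v z ≤ C) : per Ω f z ≤ C := by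
  refine csSup_le ⟨_, _, PF_const hM, rfl⟩ ?_
  rintro x ⟨u, hu, rfl⟩
  exact h u hu

lemma per_approx {Ω : Set ℂ} (hΩ : IsOpen Ω) {f : ℂ → ℝ} {M : ℝ} (hM : ∀ z ∈ Ω, |f z| ≤ M)
    {c : ℂ} {R : ℝ} (hR : 0 < R) (hb : closedBall c R ⊆ Ω) {ε : ℝ} (hε : 0 < ε) :
    ∃ v : ℂ → ℝ, ContinuousOn v Ω ∧ HarmonicOnNhd v (ball c R) ∧
      ∀ w ∈ closedBall c (R / 2), v w ≤ per Ω f w ∧ per Ω f w ≤ v w + ε := by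
  have hcΩ : c ∈ Ω := hb (mem_closedBall_self hR.le)
  have hlt : per Ω f c - ε / 3 < per Ω f c := by linarith
  have hne : {x | ∃ v, PF Ω f v ∧ x = v c}.Nonempty := ⟨_, _, PF_const hM, rfl⟩
  obtain ⟨_, ⟨v₁, hv₁, rfl⟩, hv₁c⟩ := exists_lt_of_lt_csSup hne
    (show per Ω f c - ε / 3 < sSup _ from hlt)
  have hss : sphere c R ⊆ Ω := sphere_subset_closedBall.trans hb
  have hvs := hv₁.1.1.mono hss
  refine ⟨pmod v₁ c R, pmod_continuousOn hΩ hv₁.1.1 hR hb, pmod_harmonic hvs, fun w hw => ?_⟩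
  have hwb : w ∈ ball c R := closedBall_subset_ball (by linarith) hw
  have hwΩ : w ∈ Ω := hb (ball_subset_closedBall hwb)
  refine ⟨le_per hΩ hM (hv₁.pmod hΩ hR hb) hwΩ, per_le hM fun v₂ hv₂ => ?_⟩
  set m : ℂ → ℝ := fun z => max (v₁ z) (v₂ z) with hm
  have hmP : PF Ω f m := hv₁.sup_fun hΩ hv₂
  have hms := hmP.1.1.mono hss
  have hcb : c ∈ ball c R := mem_ball_self hR
  have e1 : v₂ w ≤ pmod m c R w := (le_max_right _ _).trans (le_pmod hΩ hmP.1 hR hb w)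
  have e2 : pmod m c R c ≤ per Ω f c := le_per hΩ hM (hmP.pmod hΩ hR hb) hcΩ
  have e3 : v₁ c ≤ pmod v₁ c R c := le_pmod hΩ hv₁.1 hR hb c
  have e4 := poissonInt_harnack (g := fun z => m z - v₁ z) hR (hms.sub hvs)
    (fun z _ => sub_nonneg.2 (le_max_left _ _)) hw
  rw [← poissonInt_center _ hR, poissonInt_sub hms hvs hwb, poissonInt_sub hms hvs hcb] at e4
  rw [pmod_of_mem hwb] at e1 ⊢
  rw [pmod_of_mem hcb] at e2 e3
  linarith

lemma per_harmonic {Ω : Set ℂ} (hΩ : IsOpen Ω) {f : ℂ → ℝ} {M : ℝ} (hM : ∀ z ∈ Ω, |f z| ≤ M) :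
    HarmonicOnNhd (per Ω f) Ω := by
  intro c hc
  obtain ⟨R, hR, hb⟩ := (eventually_closedBall_sub hΩ hc).exists
  have hR2 : 0 < R / 2 := by linarith
  have hsubb : closedBall c (R / 2) ⊆ ball c R := closedBall_subset_ball (by linarith)
  have hsubΩ : closedBall c (R / 2) ⊆ Ω := hsubb.trans (ball_subset_closedBall.trans hb)
  have hcont : ContinuousOn (per Ω f) (closedBall c (R / 2)) := by
    choose v hv1 hv2 hv3 using fun n : ℕ =>
      per_approx hΩ hM hR hb (ε := 1 / ((n : ℝ) + 1)) (by positivity)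
    have hu : TendstoUniformlyOn v (per Ω f) atTop (closedBall c (R / 2)) := by
      rw [Metric.tendstoUniformlyOn_iff]
      intro ε hε
      filter_upwards [tendsto_one_div_add_atTop_nhds_zero_nat.eventually (gt_mem_nhds hε)]
        with n hn w hw
      have := hv3 n w hw
      rw [Real.dist_eq, abs_lt]
      constructor <;> linarith
    exact hu.continuousOn (Eventually.of_forall fun n => (hv1 n).mono hsubΩ).frequently
  have hps : ContinuousOn (per Ω f) (sphere c (R / 2)) := hcont.mono sphere_subset_closedBall
  have heq : ∀ w ∈ ball c (R / 2), poissonInt (per Ω f) c (R / 2) w = per Ω f w := by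
    intro w hw
    have hw' := ball_subset_closedBall hw
    have hbound : ∀ ε > 0, |poissonInt (per Ω f) c (R / 2) w - per Ω f w| ≤ ε := by
      intro ε hε
      obtain ⟨v, hv1, hv2, hv3⟩ := per_approx hΩ hM hR hb hε
      have hvs : ContinuousOn v (sphere c (R / 2)) :=
        hv1.mono (sphere_subset_closedBall.trans hsubΩ)
      have hv4 : poissonInt v c (R / 2) w = v w :=
        HarmonicOnNhd.circleAverage_poissonKernel_smul (hv2.mono hsubb) hw
      have h0 : 0 ≤ poissonInt (fun z => per Ω f z - v z) c (R / 2) w := by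
        apply circleAverage_nonneg_of_nonneg
        intro z hz
        rw [abs_of_pos hR2] at hz
        exact mul_nonneg (poissonKernel_nonneg' hw hz)
          (sub_nonneg.2 (hv3 z (sphere_subset_closedBall hz)).1)
      have h1 : poissonInt (fun z => per Ω f z - v z) c (R / 2) w ≤ ε := by
        rw [← poissonInt_const ε hw]
        apply circleAverage_mono (poissonInt_integrable (hps.sub hvs) hw)
          (poissonInt_integrable continuousOn_const hw)
        intro z hz
        rw [abs_of_pos hR2] at hz
        apply mul_le_mul_of_nonneg_left _ (poissonKernel_nonneg' hw hz)
        have := (hv3 z (sphere_subset_closedBall hz)).2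
        show per Ω f z - v z ≤ ε
        linarith
      rw [poissonInt_sub hps hvs hw, hv4] at h0 h1
      have := hv3 w hw'
      rw [abs_le]
      constructor <;> linarith
    have := le_of_forall_pos_le_add (a := |poissonInt (per Ω f) c (R / 2) w - per Ω f w|) (b := 0)
      (fun ε hε => by simpa using hbound ε hε)
    exact sub_eq_zero.1 (abs_nonpos_iff.1 this)
  refine (harmonicAt_congr_nhds ?_).1 (poissonInt_harmonic hps c (mem_ball_self hR2))
  filter_upwards [ball_mem_nhds c hR2] with w hw
  exact heq w hw

/-- Barrier property at a boundary point `a`. -/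
def HasBarrier (Ω : Set ℂ) (a : ℂ) : Prop :=
  ∀ r > 0, ∃ h : ℂ → ℝ, IsSub (fun z => - h z) Ω ∧ (∀ z ∈ Ω, 0 ≤ h z) ∧
    (∀ z ∈ Ω, z ∉ ball a r → 1 ≤ h z) ∧ Tendsto h (𝓝[Ω] a) (𝓝 0)

lemma per_tendsto {Ω : Set ℂ} (hΩ : IsOpen Ω) {f : ℂ → ℝ} {M : ℝ} (hM : ∀ z ∈ Ω, |f z| ≤ M)
    {a : ℂ} (hf : ContinuousWithinAt f Ω a) (hfa : |f a| ≤ M) (hbar : HasBarrier Ω a) :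
    Tendsto (per Ω f) (𝓝[Ω] a) (𝓝 (f a)) := by
  rw [Metric.tendsto_nhds]
  intro ε hε
  obtain ⟨r, hr, hfr⟩ := Metric.continuousWithinAt_iff.1 hf (ε / 2) (by linarith)
  obtain ⟨h, hsub, h0, h1, hlim⟩ := hbar r hr
  have hM0 : 0 ≤ M := (abs_nonneg _).trans hfa
  have hlim2 : Tendsto (fun z => 2 * M * h z) (𝓝[Ω] a) (𝓝 0) := by
    simpa using hlim.const_mul (2 * M)
  have hfa' := abs_le.1 hfa
  have lower : PF Ω f (fun z => (f a - ε / 2) + 2 * M * (- h z)) := by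
    refine ⟨(isSub_const _ _).add hΩ (hsub.const_mul (by positivity)), ∅, isCompact_empty,
      empty_subset _, fun z hz _ => ?_⟩
    have hz0 := h0 z hz
    by_cases hzr : z ∈ ball a r
    · have := hfr hz hzr
      rw [Real.dist_eq, abs_lt] at this
      have : 0 ≤ 2 * M * h z := by positivity
      linarith
    · have h1z := h1 z hz hzr
      have := abs_le.1 (hM z hz)
      nlinarith
  have upper : ∀ z ∈ Ω, per Ω f z ≤ (f a + ε / 2) + 2 * M * h z := by
    intro z hz
    refine per_le hM fun v hv => ?_
    obtain ⟨hs, K, hK, hKΩ, hle⟩ := hv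
    have hs2 : IsSub (fun z => v z + 2 * M * (- h z)) Ω :=
      hs.add hΩ (hsub.const_mul (by positivity))
    have := hs2.le_of_compact hΩ hK hKΩ (C := f a + ε / 2) (by
      intro z hz hzK
      have hvz := hle z hz hzK
      have hz0 := h0 z hz
      by_cases hzr : z ∈ ball a r
      · have := hfr hz hzr
        rw [Real.dist_eq, abs_lt] at this
        have : 0 ≤ 2 * M * h z := by positivity
        linarith
      · have h1z := h1 z hz hzr
        have := abs_le.1 (hM z hz)
        nlinarith) z hz
    linarith
  filter_upwards [hlim2.eventually (gt_mem_nhds (show (0 : ℝ) < ε / 2 by linarith)),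
    self_mem_nhdsWithin] with z hz1 hz
  have h2 := upper z hz
  have h3 := le_per hΩ hM lower hz
  rw [Real.dist_eq, abs_lt]
  constructor <;> linarith

/-- Cauchy-type integral over a subset of the imaginary axis. -/
noncomputable def kint (E : Set ℝ) (ζ : ℂ) : ℂ := ∫ t in E, ((t : ℂ) * I - ζ)⁻¹

lemma kint_norm_ge (t : ℝ) (ζ : ℂ) : -ζ.re ≤ ‖(t : ℂ) * I - ζ‖ := by
  have := Complex.re_le_norm ((t : ℂ) * I - ζ)
  simpa using this

lemma kint_ne {t : ℝ} {ζ : ℂ} (h : ζ.re < 0) : (t : ℂ) * I - ζ ≠ 0 := by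
  have := kint_norm_ge t ζ
  exact norm_pos_iff.1 (by linarith)

lemma kint_cont {ζ : ℂ} (h : ζ.re < 0) : Continuous fun t : ℝ => ((t : ℂ) * I - ζ)⁻¹ := by
  refine Continuous.inv₀ (by fun_prop) fun t => kint_ne h

lemma kint_bound {ζ : ℂ} (h : ζ.re < 0) (t : ℝ) : ‖((t : ℂ) * I - ζ)⁻¹‖ ≤ (-ζ.re)⁻¹ := by
  rw [norm_inv]
  exact inv_anti₀ (by linarith) (kint_norm_ge t ζ)

lemma kint_integrable {E : Set ℝ} (hE : volume E ≠ ⊤) {ζ : ℂ} (h : ζ.re < 0) :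
    IntegrableOn (fun t : ℝ => ((t : ℂ) * I - ζ)⁻¹) E := by
  have : IsFiniteMeasure (volume.restrict E) := ⟨by simpa using hE.lt_top⟩
  exact Integrable.of_bound (kint_cont h).aestronglyMeasurable (-ζ.re)⁻¹
    (Eventually.of_forall (kint_bound h))

lemma kint_diff {E : Set ℝ} (hE : volume E ≠ ⊤) {ζ : ℂ} (h : ζ.re < 0) :
    DifferentiableAt ℂ (kint E) ζ := by
  have : IsFiniteMeasure (volume.restrict E) := ⟨by simpa using hE.lt_top⟩
  have hs : {w : ℂ | w.re < ζ.re / 2} ∈ 𝓝 ζ :=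
    (isOpen_lt Complex.continuous_re continuous_const).mem_nhds (by
      show ζ.re < ζ.re / 2
      linarith)
  have key := hasDerivAt_integral_of_dominated_loc_of_deriv_le (μ := volume.restrict E)
    (F := fun (w : ℂ) (t : ℝ) => ((t : ℂ) * I - w)⁻¹)
    (F' := fun (w : ℂ) (t : ℝ) => (((t : ℂ) * I - w) ^ 2)⁻¹)
    (x₀ := ζ) (bound := fun _ => ((-(ζ.re / 2)) ^ 2)⁻¹) hs ?_ (kint_integrable hE h) ?_ ?_
    (integrable_const _) ?_
  · exact key.2.differentiableAt
  · filter_upwards [hs] with w hw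
    exact (kint_cont (show w.re < 0 by
      have : w.re < ζ.re / 2 := hw
      linarith)).aestronglyMeasurable
  · refine Continuous.aestronglyMeasurable (Continuous.inv₀ (by fun_prop) fun t => ?_)
    exact pow_ne_zero _ (kint_ne h)
  · refine Eventually.of_forall fun t w hw => ?_
    have hw' : w.re < ζ.re / 2 := hw
    rw [norm_inv, norm_pow]
    refine inv_anti₀ (by apply pow_pos; linarith) ?_
    refine pow_le_pow_left₀ (by linarith) ?_ 2
    have := kint_norm_ge t w
    linarith
  · refine Eventually.of_forall fun t w hw => ?_
    have hw' : w.re < ζ.re / 2 := hw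
    have hne : (t : ℂ) * I - w ≠ 0 := kint_ne (by linarith)
    have := ((hasDerivAt_id w).const_sub ((t : ℂ) * I)).inv hne
    have e : (((t : ℂ) * I - w) ^ 2)⁻¹ = - -1 / ((t : ℂ) * I - id w) ^ 2 := by
      rw [neg_neg, one_div]
      rfl
    rw [e]
    exact this

lemma kint_re_term (t : ℝ) (ζ : ℂ) :
    (((t : ℂ) * I - ζ)⁻¹).re = (-ζ.re) / (ζ.re ^ 2 + (t - ζ.im) ^ 2) := by
  rw [Complex.inv_re, Complex.normSq_apply]
  simp
  ring_nf

lemma kint_re {E : Set ℝ} (hE : volume E ≠ ⊤) {ζ : ℂ} (h : ζ.re < 0) :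
    (kint E ζ).re = ∫ t in E, (-ζ.re) / (ζ.re ^ 2 + (t - ζ.im) ^ 2) := by
  have := reCLM.integral_comp_comm (kint_integrable hE h)
  simp only [reCLM_apply, kint_re_term] at this
  exact this.symm

lemma kint_re_nonneg {E : Set ℝ} (hE : volume E ≠ ⊤) {ζ : ℂ} (h : ζ.re < 0) :
    0 ≤ (kint E ζ).re := by
  rw [kint_re hE h]
  refine integral_nonneg fun t => ?_
  have : 0 ≤ -ζ.re := by linarith
  positivity

lemma kint_re_le {E : Set ℝ} (hE : volume E ≠ ⊤) {ζ : ℂ} (h : ζ.re < 0) :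
    (kint E ζ).re ≤ (-ζ.re)⁻¹ * volume.real E :=
  (Complex.re_le_norm _).trans
    (norm_setIntegral_le_of_norm_le_const hE.lt_top fun t _ => kint_bound h t)

lemma kint_re_ge {E : Set ℝ} (hE : volume E ≠ ⊤) {ζ : ℂ} (h : ζ.re < 0)
    (hsub : Ioo (ζ.im + ζ.re) (ζ.im - ζ.re) ⊆ E) : 1 ≤ (kint E ζ).re := by
  have hitg : IntegrableOn (fun t : ℝ => (-ζ.re) / (ζ.re ^ 2 + (t - ζ.im) ^ 2)) E := by
    have := (kint_integrable hE h).re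
    simp only [RCLike.re_to_complex, kint_re_term] at this
    exact this
  rw [kint_re hE h]
  have hx : 0 < -ζ.re := by linarith
  calc (1 : ℝ) = ∫ t in Ioo (ζ.im + ζ.re) (ζ.im - ζ.re), (2 * (-ζ.re))⁻¹ := by
        rw [setIntegral_const, Real.volume_real_Ioo_of_le (by linarith), smul_eq_mul]
        have : ζ.im - ζ.re - (ζ.im + ζ.re) = 2 * (-ζ.re) := by ring
        rw [this, mul_inv_cancel₀ (by linarith)]
    _ ≤ ∫ t in Ioo (ζ.im + ζ.re) (ζ.im - ζ.re), (-ζ.re) / (ζ.re ^ 2 + (t - ζ.im) ^ 2) := by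
        refine setIntegral_mono_on
          (integrableOn_const (by rw [Real.volume_Ioo]; exact ENNReal.ofReal_ne_top)) (hitg.mono_set hsub)
          measurableSet_Ioo fun t ht => ?_
        have h1 : (t - ζ.im) ^ 2 ≤ ζ.re ^ 2 := by
          have := ht.1
          have := ht.2
          nlinarith
        have h2 : 0 < ζ.re ^ 2 := sq_pos_of_neg h
        have h3 : 0 < ζ.re ^ 2 + (t - ζ.im) ^ 2 := by positivity
        rw [inv_eq_one_div, div_le_div_iff₀ (by linarith) h3]
        nlinarith
    _ ≤ _ := by
        refine setIntegral_mono_set hitg ?_ hsub.eventuallyLE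
        refine Eventually.of_forall fun t => ?_
        show (0 : ℝ) ≤ _
        positivity

lemma isSub_of_local {Ω : Set ℂ} {v : ℂ → ℝ}
    (h : ∀ w ∈ Ω, ∃ U, IsOpen U ∧ w ∈ U ∧ IsSub v U) : IsSub v Ω := by
  refine ⟨fun w hw => ?_, fun w hw => ?_⟩
  · obtain ⟨U, hU, hwU, hs⟩ := h w hw
    exact (hs.1.continuousAt (hU.mem_nhds hwU)).continuousWithinAt
  · obtain ⟨U, hU, hwU, hs⟩ := h w hw
    exact hs.2 w hwU

lemma volume_le_of_translates {E : Set ℝ} (hE : MeasurableSet E) {T : ℝ} (hT : 0 < T)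
    (h : ∀ y ∈ E, ∀ n : ℤ, y + n * T ∈ E → n = 0) : volume E ≠ ⊤ := by
  have hle : volume E ≤ volume (Ioc (0 : ℝ) (0 + T)) := by
    by_contra! hlt
    obtain ⟨x, y, hxy, hd⟩ := exists_pair_mem_lattice_not_disjoint_vadd
      (isAddFundamentalDomain_Ioc hT 0) hE.nullMeasurableSet hlt
    rw [Set.not_disjoint_iff] at hd
    obtain ⟨z, ⟨u, hu, hu'⟩, ⟨w, hw, hw'⟩⟩ := hd
    obtain ⟨x, m, rfl⟩ := x
    obtain ⟨y, n, rfl⟩ := y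
    have e1 : m * T + u = z := by
      rw [← hu']
      show _ = m • T + u
      simp
    have e2 : n * T + w = z := by
      rw [← hw']
      show _ = n • T + w
      simp
    have : m - n = 0 := h u hu (m - n) (by
      have : u + ((m - n : ℤ) : ℝ) * T = w := by
        push_cast
        linarith
      rwa [this])
    apply hxy
    have : m = n := by omega
    subst this
    rfl
  exact ne_top_of_le_ne_top (by rw [Real.volume_Ioc]; exact ENNReal.ofReal_ne_top) hle

lemma log_branch {Ω : Set ℂ} (hΩ : IsOpen Ω) (hsc : IsSimplyConnected Ω) {a : ℂ} (ha : a ∉ Ω) :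
    ∃ l : ℂ → ℂ, DifferentiableOn ℂ l Ω ∧ ∀ z ∈ Ω, Complex.exp (l z) = z - a := by
  obtain ⟨l, hl, he⟩ := Complex.exists_continuousOn_eqOn_exp_comp hsc hΩ
    (g := fun z => z - a) (by fun_prop) (by
      rintro ⟨z, hz, hza⟩
      exact ha (sub_eq_zero.1 hza ▸ hz))
  refine ⟨l, fun z hz => ?_, fun z hz => he hz⟩
  have hn := hΩ.mem_nhds hz
  have h1 : HasDerivAt (fun w => Complex.exp w + a) (Complex.exp (l z)) (l z) :=
    (Complex.hasDerivAt_exp (l z)).add_const a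
  have := HasDerivAt.of_local_left_inverse (hl.continuousAt hn) h1 (Complex.exp_ne_zero _) (by
    filter_upwards [hn] with w hw
    have := he hw
    simp only [Function.comp_apply] at this
    rw [this]
    ring)
  exact this.differentiableAt.differentiableWithinAt

lemma log_branch_re {l : ℂ → ℂ} {z a : ℂ} (h : Complex.exp (l z) = z - a) :
    (l z).re = Real.log ‖z - a‖ := by
  rw [← h, Complex.norm_exp, Real.log_exp]

/-- The set of angles at which the chosen branch is the standard one. -/
def angSet (Ω : Set ℂ) (l : ℂ → ℂ) (a : ℂ) (r : ℝ) : Set ℝ :=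
  {y : ℝ | a + r * Complex.exp (y * I) ∈ Ω ∧
    ‖l (a + r * Complex.exp (y * I)) - (Real.log r + y * I)‖ < 1}

lemma angSet_open {Ω : Set ℂ} (hΩ : IsOpen Ω) {l : ℂ → ℂ} (hl : ContinuousOn l Ω) (a : ℂ) (r : ℝ) :
    IsOpen (angSet Ω l a r) := by
  have hc : Continuous fun y : ℝ => a + r * Complex.exp (y * I) := by fun_prop
  have hU : IsOpen ((fun y : ℝ => a + r * Complex.exp (y * I)) ⁻¹' Ω) := hΩ.preimage hc
  have hf : ContinuousOn (fun y : ℝ => ‖l (a + r * Complex.exp (y * I)) - (Real.log r + y * I)‖)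
      ((fun y : ℝ => a + r * Complex.exp (y * I)) ⁻¹' Ω) := by
    refine ContinuousOn.norm (ContinuousOn.sub ?_ (by fun_prop))
    exact hl.comp hc.continuousOn fun y hy => hy
  exact hf.isOpen_inter_preimage hU isOpen_Iio

lemma angSet_volume {Ω : Set ℂ} (hΩ : IsOpen Ω) {l : ℂ → ℂ} (hl : ContinuousOn l Ω)
    (a : ℂ) (r : ℝ) : volume (angSet Ω l a r) ≠ ⊤ := by
  refine volume_le_of_translates (angSet_open hΩ hl a r).measurableSet Real.two_pi_pos ?_
  rintro y ⟨_, hy⟩ n ⟨_, hn⟩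
  have he : Complex.exp (((y + n * (2 * π) : ℝ) : ℂ) * I) = Complex.exp (y * I) := by
    rw [Complex.exp_eq_exp_iff_exists_int]
    exact ⟨n, by push_cast; ring⟩
  rw [he] at hn
  by_contra hne
  have h1 : (1 : ℝ) ≤ |(n : ℝ)| := by
    exact_mod_cast Int.one_le_abs hne
  have h2 : ‖((n * (2 * π) : ℝ) : ℂ) * I‖ < 2 := by
    have : ((n * (2 * π) : ℝ) : ℂ) * I = (l (a + r * Complex.exp (y * I)) - (Real.log r + y * I))
      - (l (a + r * Complex.exp (y * I)) - (Real.log r + ((y + n * (2 * π) : ℝ) : ℂ) * I)) := by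
      push_cast
      ring
    rw [this]
    refine (norm_sub_le _ _).trans_lt ?_
    linarith
  rw [norm_mul, Complex.norm_I, mul_one, Complex.norm_real, Real.norm_eq_abs, abs_mul,
    abs_of_pos Real.two_pi_pos] at h2
  nlinarith [Real.pi_gt_three]

lemma mem_angSet {Ω : Set ℂ} {l : ℂ → ℂ} {a p : ℂ} {r : ℝ} (hp : p ∈ Ω) (hr : 0 < r)
    (hpr : ‖p - a‖ = r) (he : Complex.exp (l p) = p - a) : (l p).im ∈ angSet Ω l a r := by
  have h1 : (l p) = Real.log r + (l p).im * I := by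
    conv_lhs => rw [← Complex.re_add_im (l p)]
    rw [log_branch_re he, hpr]
  have h2 : a + r * Complex.exp ((l p).im * I) = p := by
    have : (r : ℂ) * Complex.exp ((l p).im * I) = Complex.exp (l p) := by
      conv_rhs => rw [h1, Complex.exp_add, ← Complex.ofReal_exp, Real.exp_log hr]
    rw [this, he]
    ring
  refine ⟨by rwa [h2], ?_⟩
  rw [h2, ← h1]
  simp

lemma hasBarrier_of_simplyConnected {Ω : Set ℂ} (hΩ : IsOpen Ω) (hsc : IsSimplyConnected Ω)
    {a : ℂ} (ha : a ∉ Ω) : HasBarrier Ω a := by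
  obtain ⟨l, hl, he⟩ := log_branch hΩ hsc ha
  classical
  intro r hr
  set E := angSet Ω l a r with hE
  have hEo : IsOpen E := angSet_open hΩ hl.continuousOn a r
  have hEv : volume E ≠ ⊤ := angSet_volume hΩ hl.continuousOn a r
  set H : ℂ → ℝ := fun z => (kint E (l z - Real.log r)).re with hH
  have hre : ∀ z ∈ Ω, (l z - Real.log r).re = Real.log ‖z - a‖ - Real.log r := by
    intro z hz
    simp [log_branch_re (he z hz)]
  have hpos : ∀ z ∈ Ω, 0 < ‖z - a‖ := by
    intro z hz
    rw [norm_pos_iff, sub_ne_zero]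
    rintro rfl
    exact ha hz
  have hneg : ∀ z ∈ Ω, z ∈ ball a r → (l z - Real.log r).re < 0 := by
    intro z hz hzb
    rw [hre z hz, sub_neg]
    exact Real.log_lt_log (hpos z hz) (by rwa [mem_ball, dist_eq_norm] at hzb)
  set h : ℂ → ℝ := fun z => if z ∈ ball a r then min (H z) 1 else 1 with hh
  have hone : ∀ w ∈ Ω, w ∉ ball a r → ∀ᶠ z in 𝓝 w, h z = 1 := by
    intro w hw hwb
    have hwr : r ≤ ‖w - a‖ := by
      rw [mem_ball, dist_eq_norm] at hwb
      exact not_lt.1 hwb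
    rcases hwr.lt_or_eq with hlt | heq
    · have : ∀ᶠ z in 𝓝 w, r < ‖z - a‖ :=
        (isOpen_lt continuous_const (by fun_prop)).mem_nhds hlt
      filter_upwards [this] with z hz
      rw [hh]
      simp only
      rw [if_neg]
      rw [mem_ball, dist_eq_norm]
      exact not_lt.2 hz.le
    · have hmem := mem_angSet (l := l) hw hr heq.symm (he w hw)
      obtain ⟨δ, hδ, hb⟩ := Metric.isOpen_iff.1 hEo _ hmem
      have hcw : ContinuousAt l w := hl.continuousOn.continuousAt (hΩ.mem_nhds hw)
      have hlw : (l w).re = Real.log r := by rw [log_branch_re (he w hw), heq]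
      have hev := Metric.continuousAt_iff'.1 hcw (δ / 2) (by linarith)
      filter_upwards [hev, hΩ.mem_nhds hw] with z hz hzΩ
      simp only [hh]
      split_ifs with hzb
      · refine min_eq_right ?_
        refine kint_re_ge hEv (hneg z hzΩ hzb) ?_
        rw [dist_eq_norm] at hz
        have h1 := Complex.abs_re_le_norm (l z - l w)
        have h2 := Complex.abs_im_le_norm (l z - l w)
        rw [Complex.sub_re, hlw] at h1
        rw [Complex.sub_im] at h2
        have h1' := abs_lt.1 (h1.trans_lt hz)
        have h2' := abs_lt.1 (h2.trans_lt hz)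
        intro t ht
        simp only [Complex.sub_re, Complex.sub_im, Complex.ofReal_re, Complex.ofReal_im,
          mem_Ioo] at ht
        apply hb
        rw [mem_ball, Real.dist_eq, abs_lt]
        constructor <;> linarith [ht.1, ht.2]
      · rfl
  have hharm : HarmonicOnNhd (fun z => - H z) (Ω ∩ ball a r) := by
    have hd : DifferentiableOn ℂ (fun z => - kint E (l z - Real.log r)) (Ω ∩ ball a r) := by
      intro z hz
      have h1 := kint_diff hEv (hneg z hz.1 hz.2)
      have h2 : DifferentiableAt ℂ (fun z => l z - Real.log r) z :=
        (hl.differentiableAt (hΩ.mem_nhds hz.1)).sub_const _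
      exact (DifferentiableAt.comp z h1 h2).neg.differentiableWithinAt
    intro z hz
    have := (hd.analyticAt ((hΩ.inter isOpen_ball).mem_nhds hz)).harmonicAt_re
    simpa using this
  refine ⟨h, ?_, ?_, ?_, ?_⟩
  · refine isSub_of_local fun w hw => ?_
    by_cases hwb : w ∈ ball a r
    · refine ⟨Ω ∩ ball a r, hΩ.inter isOpen_ball, ⟨hw, hwb⟩, ?_⟩
      refine ((harmonic_isSub (hΩ.inter isOpen_ball) hharm).sup_fun (hΩ.inter isOpen_ball)
        (isSub_const (-1) _)).congr (hΩ.inter isOpen_ball) fun z hz => ?_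
      simp only [hh, if_pos hz.2]
      rw [max_neg_neg]
    · obtain ⟨U, hU1, hU2, hU3⟩ := _root_.eventually_nhds_iff.1 (hone w hw hwb)
      refine ⟨U, hU2, hU3, (isSub_const (-1) U).congr hU2 fun z hz => ?_⟩
      rw [hU1 z hz]
  · intro z hz
    simp only [hh]
    split_ifs with hzb
    · exact le_min (kint_re_nonneg hEv (hneg z hz hzb)) zero_le_one
    · exact zero_le_one
  · intro z hz hzb
    simp only [hh, if_neg hzb]
    exact le_rfl
  · have hlim : Tendsto (fun z => (-(Real.log ‖z - a‖ - Real.log r))⁻¹ * volume.real E)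
        (𝓝[Ω] a) (𝓝 0) := by
      have h1 : Tendsto (fun z : ℂ => ‖z - a‖) (𝓝[Ω] a) (𝓝[≠] 0) := by
        refine tendsto_nhdsWithin_iff.2 ⟨?_, ?_⟩
        · have : Tendsto (fun z : ℂ => ‖z - a‖) (𝓝 a) (𝓝 ‖a - a‖) :=
            (Continuous.tendsto (by fun_prop) a)
          rw [sub_self, norm_zero] at this
          exact this.mono_left nhdsWithin_le_nhds
        · filter_upwards [self_mem_nhdsWithin] with z hz
          exact (hpos z hz).ne'
      have h2 := Real.tendsto_log_nhdsNE_zero.comp h1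
      have h3 : Tendsto (fun z => -(Real.log ‖z - a‖ - Real.log r)) (𝓝[Ω] a) atTop :=
        tendsto_neg_atBot_atTop.comp (tendsto_atBot_add_const_right _ (-Real.log r) h2)
      have h4 := (tendsto_inv_atTop_zero.comp h3).mul_const (volume.real E)
      rw [zero_mul] at h4
      exact h4
    have hev : ∀ᶠ z in 𝓝[Ω] a, z ∈ Ω ∧ z ∈ ball a r :=
      Filter.inter_mem self_mem_nhdsWithin (mem_nhdsWithin_of_mem_nhds (ball_mem_nhds a hr))
    refine tendsto_of_tendsto_of_tendsto_of_le_of_le' tendsto_const_nhds hlim ?_ ?_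
    · filter_upwards [hev] with z hz
      simp only [hh, if_pos hz.2]
      exact le_min (kint_re_nonneg hEv (hneg z hz.1 hz.2)) zero_le_one
    · filter_upwards [hev] with z hz
      simp only [hh, if_pos hz.2]
      refine (min_le_left _ _).trans ?_
      have := kint_re_le hEv (hneg z hz.1 hz.2)
      rwa [hre z hz.1] at this

lemma harmonicOnSet_of_nhd {Ω : Set ℂ} {f : ℂ → ℝ} (hf : HarmonicOnNhd f Ω) :
    HarmonicOnSet f Ω := by
  refine ⟨fun z hz => (hf z hz).1.contDiffWithinAt, fun p hp => ?_⟩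
  have hc : ContDiffAt ℝ 2 f p := (hf p hp).1
  have hL : Laplacian.laplacian f p = 0 := (hf p hp).2.self_of_nhds
  have hd : DifferentiableAt ℝ (fderiv ℝ f) p :=
    (hc.fderiv_right (m := 1) (by norm_num)).differentiableAt (by norm_num)
  have key : ∀ v : ℂ, fderiv ℝ (fun z => fderiv ℝ f z v) p v = fderiv ℝ (fderiv ℝ f) p v v := by
    intro v
    rw [fderiv_clm_apply hd (differentiableAt_const v)]
    simp
  rw [key, key]
  have := congrFun (laplacian_eq_iteratedFDeriv_complexPlane f) p
  rw [hL] at this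
  simp only [iteratedFDeriv_two_apply] at this
  simpa using this.symm

lemma dirichlet {Ω : Set ℂ} (hΩ : IsOpen Ω) (hb : Bornology.IsBounded Ω)
    (hsc : IsSimplyConnected Ω) {f : ℂ → ℝ} (hf : Continuous f) :
    ∃ ξ : ℂ → ℝ, ContinuousOn ξ (closure Ω) ∧ HarmonicOnSet ξ Ω ∧
      ∀ z ∈ frontier Ω, ξ z = f z := by
  classical
  obtain ⟨M, hM⟩ := hb.isCompact_closure.exists_bound_of_continuousOn hf.continuousOn
  have hM' : ∀ z ∈ Ω, |f z| ≤ M := fun z hz => hM z (subset_closure hz)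
  have hper := per_harmonic hΩ hM'
  set ξ : ℂ → ℝ := fun z => if z ∈ Ω then per Ω f z else f z with hξ
  have hξΩ : ∀ z ∈ Ω, ξ =ᶠ[𝓝 z] per Ω f := by
    intro z hz
    filter_upwards [hΩ.mem_nhds hz] with w hw
    simp only [hξ, if_pos hw]
  have hnot : ∀ z, z ∉ Ω → ξ z = f z := fun z hz => by simp only [hξ, if_neg hz]
  have hharm : HarmonicOnNhd ξ Ω := fun z hz =>
    (harmonicAt_congr_nhds (hξΩ z hz)).2 (hper z hz)
  refine ⟨ξ, ?_, harmonicOnSet_of_nhd hharm, fun z hz => ?_⟩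
  · intro z hz
    by_cases hzΩ : z ∈ Ω
    · exact (hharm z hzΩ).1.continuousAt.continuousWithinAt
    · have h1 : Tendsto (per Ω f) (𝓝[Ω] z) (𝓝 (f z)) :=
        per_tendsto hΩ hM' hf.continuousWithinAt (hM z hz)
          (hasBarrier_of_simplyConnected hΩ hsc hzΩ)
      apply ContinuousAt.continuousWithinAt
      show Tendsto ξ (𝓝 z) (𝓝 (ξ z))
      rw [hnot z hzΩ, ← nhdsWithin_univ, ← union_compl_self Ω, nhdsWithin_union]
      refine Tendsto.sup ?_ ?_
      · refine h1.congr' ?_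
        filter_upwards [self_mem_nhdsWithin] with w hw
        simp only [hξ, if_pos hw]
      · refine (hf.tendsto z |>.mono_left nhdsWithin_le_nhds).congr' ?_
        filter_upwards [self_mem_nhdsWithin] with w hw
        exact (hnot w hw).symm
  · refine hnot z fun h => ?_
    rw [hΩ.frontier_eq] at hz
    exact hz.2 h

lemma extend_inverse {γ : ℂ → ℂ} (hinj : Set.InjOn γ (sphere (0 : ℂ) 1))
    (hc : ContinuousOn γ (sphere (0 : ℂ) 1)) {φ : ℂ → ℝ} (hφ : Continuous φ) :
    ∃ f : ℂ → ℝ, Continuous f ∧ ∀ z ∈ sphere (0 : ℂ) 1, f (γ z) = φ z := by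
  have hcomp : CompactSpace (sphere (0 : ℂ) 1) :=
    isCompact_iff_compactSpace.1 (isCompact_sphere (0 : ℂ) 1)
  have hemb : IsClosedEmbedding ((sphere (0 : ℂ) 1).restrict γ) :=
    (continuousOn_iff_continuous_restrict.1 hc).isClosedEmbedding (injOn_iff_injective.1 hinj)
  obtain ⟨g, hg⟩ := ContinuousMap.exists_extension hemb
    (⟨fun z => φ z, by fun_prop⟩ : C(sphere (0 : ℂ) 1, ℝ))
  refine ⟨g, g.continuous, fun z hz => ?_⟩
  exact DFunLike.congr_fun hg ⟨z, hz⟩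

end Aux

theorem stmt_0 (Ω : Set ℂ) (hΩo : IsOpen Ω) (hΩb : Bornology.IsBounded Ω)
    (hΩsc : SimplyConnectedSpace Ω)
    (γ : ℂ → ℂ) (hγinj : Set.InjOn γ (Metric.sphere (0 : ℂ) 1))
    (hγC2 : ContDiffOn ℝ 2 γ (Metric.sphere (0 : ℂ) 1))
    (hΓ : frontier Ω = γ '' Metric.sphere (0 : ℂ) 1) :
    ∃ ξ η : ℂ → ℝ,
      ContinuousOn ξ (closure Ω) ∧ ContinuousOn η (closure Ω) ∧
      HarmonicOnSet ξ Ω ∧ HarmonicOnSet η Ω ∧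
      (∀ θ ∈ Set.Ico (0 : ℝ) (2 * Real.pi),
        ξ (γ (Complex.exp (θ * Complex.I))) = Real.cos θ) ∧
      (∀ θ ∈ Set.Ico (0 : ℝ) (2 * Real.pi),
        η (γ (Complex.exp (θ * Complex.I))) = Real.sin θ) ∧
      (∀ z ∈ Metric.sphere (0 : ℂ) 1,
        (ξ (γ z) : ℂ) + (η (γ z) : ℂ) * Complex.I = z) := by
  have hc := hγC2.continuousOn
  obtain ⟨f, hf, hfγ⟩ := extend_inverse hγinj hc Complex.continuous_re
  obtain ⟨g, hg, hgγ⟩ := extend_inverse hγinj hc Complex.continuous_im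
  obtain ⟨ξ, hξc, hξh, hξb⟩ := dirichlet hΩo hΩb hΩsc hf
  obtain ⟨η, hηc, hηh, hηb⟩ := dirichlet hΩo hΩb hΩsc hg
  have hfr : ∀ z ∈ Metric.sphere (0 : ℂ) 1, γ z ∈ frontier Ω := fun z hz => by
    rw [hΓ]
    exact Set.mem_image_of_mem γ hz
  have h1 : ∀ z ∈ Metric.sphere (0 : ℂ) 1, ξ (γ z) = z.re := fun z hz => by
    rw [hξb _ (hfr z hz), hfγ z hz]
  have h2 : ∀ z ∈ Metric.sphere (0 : ℂ) 1, η (γ z) = z.im := fun z hz => by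
    rw [hηb _ (hfr z hz), hgγ z hz]
  have hexp : ∀ θ : ℝ, Complex.exp (θ * Complex.I) ∈ Metric.sphere (0 : ℂ) 1 := fun θ => by
    rw [mem_sphere_zero_iff_norm, Complex.norm_exp_ofReal_mul_I]
  refine ⟨ξ, η, hξc, hηc, hξh, hηh, fun θ _ => ?_, fun θ _ => ?_, fun z hz => ?_⟩
  · rw [h1 _ (hexp θ), Complex.exp_ofReal_mul_I_re]
  · rw [h2 _ (hexp θ), Complex.exp_ofReal_mul_I_im]
  · rw [h1 z hz, h2 z hz, Complex.re_add_im]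
end

section
/- Let Ω ⊂ ℂ be a bounded, open, simply connected set whose frontier Γ = ∂Ω equals the image of an injective, twice continuously differentiable map γ : S¹ → ℂ from the unit circle, and let g = ξ + iη : closure(Ω) → ℂ be continuous on closure(Ω), with ξ, η harmonic on Ω, satisfying g(γ(z)) = z for all z ∈ S¹. Then the restriction of g to Ω is a C² diffeomorphism from Ω onto the open unit disk D = {z ∈ ℂ : |z| < 1}: g is twice continuously differentiable on Ω, injective on Ω, g(Ω) = D, and the inverse map g⁻¹ : D → Ω is twice continuously differentiable. -/
open Complex Metric Set

lemma exists_log_ratio {B Y : Set ℂ} (hBo : IsOpen B) (hBc : IsPreconnected B)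
    (hd : Disjoint B Y) {a b : ℂ} (ha : a ∈ B) (hb : b ∈ B) :
    ∃ L : ℂ → ℂ, ContinuousOn L Y ∧ ∀ z ∈ Y, exp (L z) = (z - a) / (z - b) := by
  have hne : ∀ x ∈ B, ∀ z ∈ Y, z - x ≠ 0 := by
    intro x hx z hz h
    rw [sub_eq_zero] at h
    exact Set.disjoint_left.1 hd hx (h ▸ hz)
  refine hBc.induction₂ (fun a b => ∃ L : ℂ → ℂ, ContinuousOn L Y ∧
    ∀ z ∈ Y, exp (L z) = (z - a) / (z - b)) ?_ ?_ ?_ ha hb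
  · intro x hx
    obtain ⟨δ, hδ, hball⟩ := Metric.isOpen_iff.1 hBo x hx
    filter_upwards [mem_nhdsWithin_of_mem_nhds (ball_mem_nhds x (half_pos hδ)),
      self_mem_nhdsWithin] with y hy hyB
    have hsl : ∀ z ∈ Y, (z - x) / (z - y) ∈ slitPlane := by
      intro z hz
      have h1 : δ / 2 ≤ ‖z - y‖ := by
        by_contra! hlt
        have : z ∈ ball x δ := by
          rw [mem_ball, dist_eq_norm] at *
          calc ‖z - x‖ = ‖(z - y) + (y - x)‖ := by ring_nf
            _ ≤ ‖z - y‖ + ‖y - x‖ := norm_add_le _ _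
            _ < δ := by linarith
        exact Set.disjoint_left.1 hd (hball this) hz
      have h2 : (z - x) / (z - y) = 1 + (y - x) / (z - y) := by
        have := hne y hyB z hz
        field_simp
        ring
      rw [h2]
      apply mem_slitPlane_of_norm_lt_one
      rw [norm_div, div_lt_one (by linarith [half_pos hδ])]
      rw [mem_ball, dist_eq_norm] at hy
      linarith
    refine ⟨fun z => log ((z - x) / (z - y)), ?_, ?_⟩
    · refine ContinuousOn.clog ?_ hsl
      exact ContinuousOn.div (by fun_prop) (by fun_prop) (fun z hz => hne y hyB z hz)
    · intro z hz
      exact exp_log (div_ne_zero (hne x hx z hz) (hne y hyB z hz))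
  · rintro x y w hx hy hw ⟨L1, c1, h1⟩ ⟨L2, c2, h2⟩
    refine ⟨fun z => L1 z + L2 z, c1.add c2, fun z hz => ?_⟩
    rw [exp_add, h1 z hz, h2 z hz]
    have := hne x hx z hz
    have := hne y hy z hz
    have := hne w hw z hz
    field_simp
  · rintro x y hx hy ⟨L1, c1, h1⟩
    refine ⟨fun z => - L1 z, c1.neg, fun z hz => ?_⟩
    rw [exp_neg, h1 z hz, inv_div]

/-- principal log continuous off the vertical segment -/
lemma ratio_mem_slitPlane {x y : ℝ} (hy : 0 < y) {z : ℂ}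
    (hz : z.re = x → y < |z.im|) :
    (z - (x + y * I)) / (z - (x - y * I)) ∈ slitPlane := by
  have hb : z - (x - y * I) ≠ 0 := by
    intro h
    have h1 := congrArg Complex.re h
    have h2 := congrArg Complex.im h
    simp at h1 h2
    have := hz (by linarith)
    rw [show z.im = -y by linarith, abs_neg, abs_of_pos hy] at this
    exact lt_irrefl _ this
  have ha : z - (x + y * I) ≠ 0 := by
    intro h
    have h1 := congrArg Complex.re h
    have h2 := congrArg Complex.im h
    simp at h1 h2
    have := hz (by linarith)
    rw [show z.im = y by linarith, abs_of_pos hy] at this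
    exact lt_irrefl _ this
  rw [mem_slitPlane_iff_not_le_zero]
  intro hle
  set q := (z - (x + y * I)) / (z - (x - y * I)) with hq
  have him : q.im = 0 := by simpa using (Complex.le_def.1 hle).2
  have hre : q.re ≤ 0 := by simpa using (Complex.le_def.1 hle).1
  have hqe : q * (z - (x - y * I)) = z - (x + y * I) := by
    rw [hq]; field_simp
  have h1 := congrArg Complex.re hqe
  have h2 := congrArg Complex.im hqe
  simp [him] at h1 h2
  have h3 : (q.re - 1) * (z.re - x) = 0 := by linarith
  have h4 : z.re = x := by
    rcases mul_eq_zero.1 h3 with h | h <;> linarith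
  have := hz h4
  have h5 : (1 - q.re) * z.im = (1 + q.re) * y := by linarith
  have h6 : |(1 - q.re) * z.im| = (1 - q.re) * |z.im| := by
    rw [abs_mul, abs_of_pos (by linarith)]
  have h7 : |(1 + q.re) * y| = |1 + q.re| * y := by
    rw [abs_mul, abs_of_pos hy]
  rw [h5, h7] at h6
  have h8 : |1 + q.re| ≤ 1 - q.re := abs_le.2 ⟨by linarith, by linarith⟩
  nlinarith

lemma no_crossing {A B : Set ℂ} (hAo : IsOpen A) (hAc : IsPreconnected A)
    (hBo : IsOpen B) (hBc : IsPreconnected B) (hd : Disjoint A B)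
    (h0A : (0 : ℂ) ∉ A) (h0B : (0 : ℂ) ∉ B) {x y : ℝ} (hx : 0 < x) (hy : 0 < y) {e : ℂ}
    (he : 0 < e.im * x - e.re * y) {r : ℝ} (hr : 0 < r)
    (h1 : ∀ t : ℝ, 0 < t → t ≤ r → (t : ℂ) ∈ A)
    (h2 : ∀ t : ℝ, 0 < t → t ≤ r → (t : ℂ) * e ∈ A)
    (h3 : ∀ t : ℝ, 0 < t → t ≤ r → (t : ℂ) * (x + y * I) ∈ B)
    (h4 : ∀ t : ℝ, 0 < t → t ≤ r → (t : ℂ) * (x - y * I) ∈ B) : False := by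
  have hApc : IsPathConnected A :=
    (hAo.isConnected_iff_isPathConnected).1 ⟨⟨_, h1 r hr le_rfl⟩, hAc⟩
  obtain ⟨σ, hσ⟩ := hApc.joinedIn _ (h1 r hr le_rfl) _ (h2 r hr le_rfl)
  set S : Set ℂ := range σ with hS
  have hScomp : IsCompact S := isCompact_range σ.continuous
  have hSA : S ⊆ A := by rintro _ ⟨t, rfl⟩; exact hσ t
  have hSconn : IsPreconnected S := isPreconnected_range σ.continuous
  have hrS : (r : ℂ) ∈ S := ⟨0, by simp⟩
  have heS : (r : ℂ) * e ∈ S := ⟨1, by simp⟩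
  -- small ball avoiding S
  obtain ⟨ρ, hρ, hρS⟩ := Metric.isOpen_iff.1 hScomp.isClosed.isOpen_compl 0
    (fun h => h0A (hSA h))
  obtain ⟨ε, hε, hεr, hεx, hερ⟩ : ∃ ε : ℝ, 0 < ε ∧ ε ≤ r ∧ ε * x < r ∧ ε * (x + y) < ρ := by
    refine ⟨min r (min (r / (2 * x)) (ρ / (2 * (x + y)))), by positivity, min_le_left _ _, ?_, ?_⟩
    · calc _ ≤ r / (2 * x) * x := by gcongr; exact (min_le_right _ _).trans (min_le_left _ _)
        _ < r := by field_simp; linarith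
    · calc _ ≤ ρ / (2 * (x + y)) * (x + y) := by
            gcongr; exact (min_le_right _ _).trans (min_le_right _ _)
        _ < ρ := by field_simp; linarith
  set X := ε * x with hX
  set D := ε * y with hD
  have hXp : 0 < X := by positivity
  have hDp : 0 < D := by positivity
  have haB : ((X : ℂ) + D * I) ∈ B := by
    have := h3 ε hε hεr
    convert this using 1
    simp [hX, hD]; ring
  have hbB : ((X : ℂ) - D * I) ∈ B := by
    have := h4 ε hε hεr
    convert this using 1
    simp [hX, hD]; ring
  set Y : Set ℂ := insert 0 A with hY
  have hdY : Disjoint B Y := by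
    rw [hY, Set.disjoint_insert_right]
    exact ⟨h0B, hd.symm⟩
  obtain ⟨L, hLc, hL⟩ := exists_log_ratio hBo hBc hdY haB hbB
  set q : ℂ → ℂ := fun z => (z - (X + D * I)) / (z - (X - D * I)) with hq
  -- the connected set
  set T1 : Set ℂ := (fun t : ℝ => (t : ℂ)) '' Ioc X r with hT1
  set T2 : Set ℂ := (fun t : ℝ => (t : ℂ)) '' Ico 0 X with hT2
  set T3 : Set ℂ := (fun t : ℝ => (t : ℂ) * e) '' Icc 0 r with hT3
  have cT1 : IsPreconnected T1 := isPreconnected_Ioc.image _ (by fun_prop)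
  have cT2 : IsPreconnected T2 := isPreconnected_Ico.image _ (by fun_prop)
  have cT3 : IsPreconnected T3 := isPreconnected_Icc.image _ (by fun_prop)
  set Z : Set ℂ := ((T1 ∪ S) ∪ T3) ∪ T2 with hZ
  have cZ : IsPreconnected Z := by
    refine IsPreconnected.union (0 : ℂ) ?_ ?_ (IsPreconnected.union ((r : ℂ) * e) ?_ ?_
      (IsPreconnected.union (r : ℂ) ?_ hrS cT1 hSconn) cT3) cT2
    · exact Or.inr ⟨0, ⟨le_rfl, hr.le⟩, by simp⟩
    · exact ⟨0, ⟨le_rfl, hXp⟩, by simp⟩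
    · exact Or.inr heS
    · exact ⟨r, ⟨hr.le, le_rfl⟩, rfl⟩
    · exact ⟨r, ⟨hεx, le_rfl⟩, rfl⟩
  have hZY : Z ⊆ Y := by
    rintro z (((⟨t, ht, rfl⟩ | hz) | ⟨t, ht, rfl⟩) | ⟨t, ht, rfl⟩)
    · exact Or.inr (h1 t (hXp.trans ht.1) ht.2)
    · exact Or.inr (hSA hz)
    · rcases ht.1.eq_or_lt with h | h
      · left; simp [← h]
      · exact Or.inr (h2 t h ht.2)
    · rcases ht.1.eq_or_lt with h | h
      · left; simp [← h]
      · exact Or.inr (h1 t h (ht.2.le.trans hεx.le))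
  have hZsl : ∀ z ∈ Z, q z ∈ slitPlane := by
    intro z hz
    apply ratio_mem_slitPlane hDp
    intro hre
    rcases hz with (((⟨t, ht, rfl⟩ | hz) | ⟨t, ht, rfl⟩) | ⟨t, ht, rfl⟩)
    · simp at hre; linarith [ht.1]
    · by_contra! hle
      refine hρS ?_ hz
      rw [mem_ball_zero_iff]
      calc ‖z‖ ≤ |z.re| + |z.im| := norm_le_abs_re_add_abs_im z
        _ ≤ X + D := by rw [hre, abs_of_pos hXp]; linarith
        _ < ρ := by rw [hX, hD]; linarith
    · simp at hre
      simp only [mul_im, ofReal_re, ofReal_im, zero_mul, add_zero]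
      refine lt_of_lt_of_le ?_ (le_abs_self _)
      have ht0 : 0 < t := by
        rcases ht.1.eq_or_lt with h | h
        · rw [← h] at hre; linarith
        · exact h
      have h5 : t * (e.re * y) < t * (e.im * x) := by
        apply mul_lt_mul_of_pos_left _ ht0; linarith
      have h6 : t * e.re * y = ε * x * y := by rw [hre]
      have h7 : (ε * y) * x < (t * e.im) * x := by nlinarith
      exact lt_of_mul_lt_mul_right h7 hx.le
    · simp at hre; linarith [ht.2]
  have hbne : ∀ z ∈ Y, z - (X - D * I) ≠ 0 := by
    intro z hz h
    rw [sub_eq_zero] at h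
    exact Set.disjoint_left.1 hdY hbB (h ▸ hz)
  have hlogc : ContinuousOn (fun z => log (q z)) Z := by
    refine ContinuousOn.clog ?_ hZsl
    exact ContinuousOn.div (by fun_prop) (by fun_prop) (fun z hz => hbne z (hZY hz))
  -- difference is constant
  have hconst : ∀ z ∈ Z, L z - log (q z) = L r - log (q r) := by
    have hrZ : (r : ℂ) ∈ Z := Or.inl (Or.inl (Or.inr hrS))
    intro z hz
    refine Complex.isCoveringMap_exp.constOn_of_comp (g := fun z => L z - log (q z)) cZ
      ((hLc.mono hZY).sub hlogc) ?_ hz hrZ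
    have key : ∀ w ∈ Z, exp (L w - log (q w)) = 1 := by
      intro w hw
      rw [exp_sub, hL w (hZY hw), exp_log (slitPlane_ne_zero (hZsl w hw))]
      exact div_self (slitPlane_ne_zero (hZsl w hw))
    intro a ha b hb
    exact Subtype.ext ((key a ha).trans (key b hb).symm)
  -- limit at X
  have hrZ : (r : ℂ) ∈ Z := Or.inl (Or.inl (Or.inr hrS))
  set k := L r - log (q r) with hk
  have hexpk : exp k = 1 := by
    rw [hk, exp_sub, hL r (hZY hrZ), exp_log (slitPlane_ne_zero (hZsl r hrZ))]
    exact div_self (slitPlane_ne_zero (hZsl r hrZ))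
  have hXA : (X : ℂ) ∈ A := h1 X hXp hεx.le
  have hXY : (X : ℂ) ∈ Y := Or.inr hXA
  have hLX : ContinuousAt L X :=
    hLc.continuousAt (Filter.mem_of_superset (hAo.mem_nhds hXA) (subset_insert _ _))
  have hsymm : ∀ u : ℝ, 0 < u → u < min X (r - X) →
      L ((X - u : ℝ) : ℂ) - k = (starRingEnd ℂ) (L ((X + u : ℝ) : ℂ) - k) := by
    intro u hu huX
    have hu1 := huX.trans_le (min_le_left _ _)
    have hu2 := huX.trans_le (min_le_right _ _)
    have m1 : ((X - u : ℝ) : ℂ) ∈ Z := Or.inr ⟨X - u, ⟨by linarith, by linarith⟩, rfl⟩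
    have m2 : ((X + u : ℝ) : ℂ) ∈ Z :=
      Or.inl (Or.inl (Or.inl ⟨X + u, ⟨by linarith, by linarith⟩, rfl⟩))
    have e1 := hconst _ m1
    have e2 := hconst _ m2
    have e3 : L ((X - u : ℝ) : ℂ) - k = log (q ((X - u : ℝ) : ℂ)) := by rw [← e1]; ring
    have e4 : L ((X + u : ℝ) : ℂ) - k = log (q ((X + u : ℝ) : ℂ)) := by rw [← e2]; ring
    rw [e3, e4, ← log_conj _ (mem_slitPlane_iff_arg.1 (hZsl _ m2)).1]
    congr 1
    simp only [hq, map_div₀, map_sub, map_add, map_mul, conj_ofReal, conj_I]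
    rw [← neg_div_neg_eq]
    push_cast
    congr 1 <;> ring
  have hlim1 : Filter.Tendsto (fun u : ℝ => L ((X - u : ℝ) : ℂ) - k) (nhdsWithin 0 (Ioi 0))
      (nhds (L X - k)) := by
    refine Filter.Tendsto.mono_left ?_ nhdsWithin_le_nhds
    refine Filter.Tendsto.sub_const (hLX.tendsto.comp ?_) _
    have : Continuous (fun u : ℝ => ((X - u : ℝ) : ℂ)) := by fun_prop
    simpa using this.tendsto 0
  have hlim2 : Filter.Tendsto (fun u : ℝ => (starRingEnd ℂ) (L ((X + u : ℝ) : ℂ) - k))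
      (nhdsWithin 0 (Ioi 0)) (nhds ((starRingEnd ℂ) (L X - k))) := by
    refine Filter.Tendsto.mono_left ?_ nhdsWithin_le_nhds
    refine (Complex.continuous_conj.tendsto _).comp ?_
    refine Filter.Tendsto.sub_const (hLX.tendsto.comp ?_) _
    have : Continuous (fun u : ℝ => ((X + u : ℝ) : ℂ)) := by fun_prop
    simpa using this.tendsto 0
  have hev : (fun u : ℝ => L ((X - u : ℝ) : ℂ) - k) =ᶠ[nhdsWithin 0 (Ioi 0)]
      (fun u : ℝ => (starRingEnd ℂ) (L ((X + u : ℝ) : ℂ) - k)) := by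
    have hpos : 0 < min X (r - X) := lt_min hXp (by linarith)
    filter_upwards [Ioo_mem_nhdsGT hpos] with u hu
    exact hsymm u hu.1 hu.2
  have hreal : L X - k = (starRingEnd ℂ) (L X - k) :=
    tendsto_nhds_unique hlim1 (hlim2.congr' hev.symm)
  obtain ⟨v, hv⟩ := Complex.conj_eq_iff_real.1 hreal.symm
  have hexp : exp (L X - k) = -1 := by
    rw [exp_sub, hL _ hXY, hexpk, div_one]
    have hI : (D : ℂ) * I ≠ 0 := by simp [hDp.ne']
    rw [div_eq_iff (hbne _ hXY)]
    ring
  rw [hv, ← ofReal_exp] at hexp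
  have : Real.exp v = -1 := by exact_mod_cast hexp
  linarith [Real.exp_pos v]

open InnerProductSpace Topology in
lemma HarmonicOnSet.harmonicOnNhd {f : ℂ → ℝ} {U : Set ℂ} (hU : IsOpen U)
    (hf : HarmonicOnSet f U) : HarmonicOnNhd f U := by
  intro p hp
  refine ⟨hf.1.contDiffAt (hU.mem_nhds hp), ?_⟩
  filter_upwards [hU.mem_nhds hp] with z hz
  have hd : DifferentiableAt ℝ (fderiv ℝ f) z :=
    ((hf.1.contDiffAt (hU.mem_nhds hz)).fderiv_right (m := 1) (by norm_num)).differentiableAt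
      (by norm_num)
  have h := hf.2 z hz
  rw [laplacian_eq_iteratedFDeriv_complexPlane]
  simp only [iteratedFDeriv_two_apply]
  rw [fderiv_clm_apply hd (by fun_prop), fderiv_clm_apply hd (by fun_prop)] at h
  simpa using h

open InnerProductSpace Topology in
lemma harmonic_eventually_const {h : ℂ → ℝ} {y : ℂ} (hh : HarmonicAt h y) (hm : IsLocalMax h y) :
    ∀ᶠ z in 𝓝 y, h z = h y := by
  obtain ⟨R, hR, hball⟩ := Metric.eventually_nhds_iff_ball.1 hh.eventually
  obtain ⟨F, hF, hFre⟩ := HarmonicOnNhd.exists_analyticOnNhd_ball_re_eq (fun z hz => hball z hz)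
  have hn : ∀ z ∈ ball y R, ‖exp (F z)‖ = Real.exp (h z) := by
    intro z hz
    rw [norm_exp]
    congr 1
    exact hFre hz
  have hd : ∀ᶠ z in 𝓝 y, DifferentiableAt ℂ (fun z => exp (F z)) z := by
    filter_upwards [ball_mem_nhds y hR] with z hz
    exact (hF z hz).differentiableAt.cexp
  have hmax : IsLocalMax (norm ∘ fun z => exp (F z)) y := by
    filter_upwards [hm, ball_mem_nhds y hR] with z hz hzb
    simp only [Function.comp]
    rw [hn z hzb, hn y (mem_ball_self hR)]
    exact Real.exp_le_exp.2 hz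
  have := Complex.eventually_eq_of_isLocalMax_norm hd hmax
  filter_upwards [this, ball_mem_nhds y hR] with z hz hzb
  have := congrArg norm hz
  rw [hn z hzb, hn y (mem_ball_self hR)] at this
  exact Real.exp_injective this

/-- Components of the positive set all contain the positive part of the boundary. -/
lemma component_eq {Ω : Set ℂ} (hΩo : IsOpen Ω) (hΩb : Bornology.IsBounded Ω) {H : ℂ → ℝ}
    (hH : Continuous H) (hmax : ∀ y ∈ Ω, ¬ IsLocalMax H y)
    (hfr : IsPreconnected (frontier Ω ∩ {z | 0 < H z})) {x₁ x₂ : ℂ} (hx₁ : x₁ ∈ Ω)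
    (hx₂ : x₂ ∈ Ω) (h₁ : 0 < H x₁) (h₂ : 0 < H x₂) :
    connectedComponentIn {z | 0 < H z} x₁ = connectedComponentIn {z | 0 < H z} x₂ := by
  have hPo : IsOpen {z | 0 < H z} := isOpen_lt continuous_const hH
  have key : ∀ x ∈ Ω, 0 < H x → ∃ y ∈ frontier Ω ∩ {z | 0 < H z},
      y ∈ connectedComponentIn {z | 0 < H z} x := by
    intro x hx hxp
    set V := connectedComponentIn (Ω ∩ {z | 0 < H z}) x with hV
    have hVo : IsOpen V := (hΩo.inter hPo).connectedComponentIn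
    have hxV : x ∈ V := mem_connectedComponentIn ⟨hx, hxp⟩
    have hVΩ : V ⊆ Ω ∩ {z | 0 < H z} := connectedComponentIn_subset _ _
    have hVcomp : IsCompact (closure V) :=
      (hΩb.subset (hVΩ.trans inter_subset_left)).isCompact_closure
    obtain ⟨y, hyV, hy⟩ := hVcomp.exists_isMaxOn ⟨x, subset_closure hxV⟩ hH.continuousOn
    have hyp : 0 < H y := hxp.trans_le (hy (subset_closure hxV))
    have hconn : IsPreconnected (insert y V) := by
      refine isPreconnected_connectedComponentIn.subset_closure (subset_insert _ _) ?_
      exact insert_subset hyV subset_closure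
    by_cases hyΩ : y ∈ Ω
    · exfalso
      have hyV' : y ∈ V := by
        have : insert y V ⊆ V := by
          refine hconn.subset_connectedComponentIn (mem_insert_of_mem _ hxV) ?_
          exact insert_subset ⟨hyΩ, hyp⟩ hVΩ
        exact this (mem_insert _ _)
      apply hmax y hyΩ
      filter_upwards [hVo.mem_nhds hyV'] with z hz
      exact hy (subset_closure hz)
    · refine ⟨y, ⟨?_, hyp⟩, ?_⟩
      · rw [hΩo.frontier_eq]
        exact ⟨closure_mono (hVΩ.trans inter_subset_left) hyV, hyΩ⟩
      · refine hconn.subset_connectedComponentIn (mem_insert_of_mem _ hxV) ?_ (mem_insert _ _)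
        exact insert_subset hyp (hVΩ.trans inter_subset_right)
  obtain ⟨y₁, hy₁, hc₁⟩ := key x₁ hx₁ h₁
  obtain ⟨y₂, hy₂, hc₂⟩ := key x₂ hx₂ h₂
  rw [connectedComponentIn_eq hc₁, connectedComponentIn_eq hc₂]
  exact connectedComponentIn_eq
    (hfr.subset_connectedComponentIn hy₁ inter_subset_right hy₂)

open InnerProductSpace Topology in
lemma critical_false {H : ℂ → ℝ} {p : ℂ} (hh : HarmonicAt H p) (hp : H p = 0)
    (hf : fderiv ℝ H p = 0) (hnc : ¬ ∀ᶠ z in 𝓝 p, H z = 0) {A B : Set ℂ}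
    (hAo : IsOpen A) (hAc : IsPreconnected A) (hBo : IsOpen B) (hBc : IsPreconnected B)
    (hA : ∀ z ∈ A, 0 < H z) (hB : ∀ z ∈ B, H z < 0)
    (hA' : ∀ᶠ z in 𝓝 p, 0 < H z → z ∈ A) (hB' : ∀ᶠ z in 𝓝 p, H z < 0 → z ∈ B) : False := by
  obtain ⟨R, hR, hball⟩ := Metric.eventually_nhds_iff_ball.1 hh.eventually
  obtain ⟨F₀, hF₀, hFre₀⟩ :=
    HarmonicOnNhd.exists_analyticOnNhd_ball_re_eq (fun z hz => hball z hz)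
  set F : ℂ → ℂ := fun z => F₀ z - (F₀ p).im * I with hFdef
  have hF : AnalyticAt ℂ F p := (hF₀ p (mem_ball_self hR)).sub analyticAt_const
  have hFre : ∀ᶠ z in 𝓝 p, (F z).re = H z := by
    filter_upwards [ball_mem_nhds p hR] with z hz
    rw [← hFre₀ hz]
    simp [hFdef]
  have hFp : F p = 0 := by
    apply Complex.ext
    · rw [hFre.self_of_nhds, hp]; simp
    · simp [hFdef]
  have hne : ¬ ∀ᶠ z in 𝓝 p, F z = 0 := by
    intro hev
    apply hnc
    filter_upwards [hev, hFre] with z h1 h2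
    rw [← h2, h1]; simp
  obtain ⟨m, G, hG, hG0, hFG⟩ := hF.exists_eventuallyEq_pow_smul_nonzero_iff.2 hne
  -- derivative vanishes
  have hder : deriv F p = 0 := by
    have h1 : HasFDerivAt (fun z => (F z).re)
        (reCLM.comp ((fderiv ℂ F p).restrictScalars ℝ)) p :=
      reCLM.hasFDerivAt.comp p (hF.differentiableAt.hasFDerivAt.restrictScalars ℝ)
    have h2 := (h1.congr_of_eventuallyEq (hFre.mono fun z hz => hz.symm)).fderiv
    rw [hf] at h2
    have h3 := DFunLike.congr_fun h2 1
    have h4 := DFunLike.congr_fun h2 I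
    have h5 : (fderiv ℂ F p) I = I * deriv F p := by
      rw [← fderiv_apply_one_eq_deriv, ← smul_eq_mul, ← map_smul]; simp
    simp [h5] at h3 h4
    exact Complex.ext (by simpa using h3.symm) (by simpa using h4)
  have hm0 : m ≠ 0 := by
    rintro rfl
    have := hFG.self_of_nhds
    rw [hFp] at this
    simp at this
    exact hG0 this.symm
  have hm1 : m ≠ 1 := by
    rintro rfl
    have h1 : HasDerivAt (fun z => (z - p) ^ 1 • G z) (G p) p := by
      have := (((hasDerivAt_id p).sub_const p).mul hG.differentiableAt.hasDerivAt)
      simpa [Pi.mul_def] using this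
    have h2 := (h1.congr_of_eventuallyEq hFG).deriv
    exact hG0 (h2.symm.trans hder)
  have hm : 2 ≤ m := by omega
  obtain ⟨u, hu⟩ := IsAlgClosed.exists_pow_nat_eq (G p)⁻¹ (Nat.pos_of_ne_zero hm0)
  have hu0 : u ≠ 0 := by
    rintro rfl
    rw [zero_pow hm0] at hu
    exact inv_ne_zero hG0 hu.symm
  -- behaviour along rays
  have hpath : ∀ ζ : ℂ, Filter.Tendsto (fun t : ℝ => p + u * (t * ζ)) (𝓝[>] 0) (𝓝 p) := by
    intro ζ
    refine Filter.Tendsto.mono_left ?_ nhdsWithin_le_nhds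
    have : Continuous (fun t : ℝ => p + u * (t * ζ)) := by fun_prop
    simpa using this.tendsto 0
  have hray : ∀ ζ : ℂ, ∀ᶠ t : ℝ in 𝓝[>] 0,
      H (p + u * (t * ζ)) = t ^ m * (ζ ^ m * (u ^ m * G (p + u * (t * ζ)))).re := by
    intro ζ
    filter_upwards [(hpath ζ).eventually hFG, (hpath ζ).eventually hFre] with t h1 h2
    rw [← h2, h1, ← re_ofReal_mul]
    congr 1
    simp only [add_sub_cancel_left, smul_eq_mul]
    push_cast
    ring
  have hlim : ∀ ζ : ℂ, Filter.Tendsto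
      (fun t : ℝ => (ζ ^ m * (u ^ m * G (p + u * (t * ζ)))).re) (𝓝[>] 0) (𝓝 (ζ ^ m).re) := by
    intro ζ
    have h1 : Filter.Tendsto (fun t : ℝ => ζ ^ m * (u ^ m * G (p + u * (t * ζ)))) (𝓝[>] 0)
        (𝓝 (ζ ^ m * (u ^ m * G p))) :=
      ((hG.continuousAt.tendsto.comp (hpath ζ)).const_mul _).const_mul _
    rw [show u ^ m * G p = 1 by rw [hu, inv_mul_cancel₀ hG0], mul_one] at h1
    exact (continuous_re.tendsto _).comp h1
  have hpos : ∀ ζ : ℂ, 0 < (ζ ^ m).re → ∀ᶠ t : ℝ in 𝓝[>] 0, p + u * (t * ζ) ∈ A := by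
    intro ζ hζ
    filter_upwards [hray ζ, (hlim ζ).eventually_const_lt hζ, (hpath ζ).eventually hA',
      self_mem_nhdsWithin] with t h1 h2 h3 h4
    apply h3
    rw [h1]
    exact mul_pos (pow_pos h4 _) h2
  have hneg : ∀ ζ : ℂ, (ζ ^ m).re < 0 → ∀ᶠ t : ℝ in 𝓝[>] 0, p + u * (t * ζ) ∈ B := by
    intro ζ hζ
    filter_upwards [hray ζ, (hlim ζ).eventually_lt_const hζ, (hpath ζ).eventually hB',
      self_mem_nhdsWithin] with t h1 h2 h3 h4
    apply h3
    rw [h1]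
    exact mul_neg_of_pos_of_neg (pow_pos h4 _) h2
  have hmR : (2 : ℝ) ≤ m := by exact_mod_cast hm
  have hmC : (m : ℂ) ≠ 0 := by exact_mod_cast hm0
  set φ : ℝ := 2 * Real.pi / (3 * m) with hφ
  set α : ℝ := 2 * Real.pi / m with hα
  have hπ := Real.pi_pos
  have hφ0 : 0 < φ := by positivity
  have hφ1 : φ < Real.pi / 2 := by
    rw [hφ, div_lt_div_iff₀ (by positivity) (by norm_num)]; nlinarith
  have hαφ : α - φ = 2 * φ := by rw [hα, hφ]; field_simp; ring
  have hmφ : (m : ℝ) * φ = 2 * Real.pi / 3 := by rw [hφ]; field_simp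
  have hmα : (m : ℝ) * α = 2 * Real.pi := by rw [hα]; field_simp
  have hcos : Real.cos (2 * Real.pi / 3) < 0 :=
    Real.cos_neg_of_pi_div_two_lt_of_lt (by linarith) (by linarith)
  have hexpm : ∀ θ : ℝ, ((exp (θ * I)) ^ m).re = Real.cos (m * θ) := by
    intro θ
    rw [← Complex.exp_nat_mul, show (m : ℂ) * (θ * I) = ((m * θ : ℝ) : ℂ) * I by push_cast; ring,
      exp_ofReal_mul_I_re]
  have e1 := hpos 1 (by simp)
  have e2 := hpos (exp (α * I)) (by rw [hexpm, hmα]; simp)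
  have e3 := hneg (exp (φ * I)) (by rw [hexpm, hmφ]; exact hcos)
  have e4 := hneg (exp ((-φ : ℝ) * I)) (by
    rw [hexpm, mul_neg, Real.cos_neg, hmφ]; exact hcos)
  obtain ⟨r, hr, hrs⟩ := mem_nhdsGT_iff_exists_Ioc_subset.1 (((e1.and e2).and e3).and e4)
  have hcont : Continuous (fun w : ℂ => p + u * w) := by fun_prop
  have hinvc : Continuous (fun z : ℂ => (z - p) / u) := by fun_prop
  have hpre : ∀ C : Set ℂ, IsPreconnected C → IsPreconnected ((fun w : ℂ => p + u * w) ⁻¹' C) := by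
    intro C hC
    have : (fun w : ℂ => p + u * w) ⁻¹' C = (fun z : ℂ => (z - p) / u) '' C := by
      ext w
      constructor
      · intro hw
        exact ⟨_, hw, by field_simp; ring⟩
      · rintro ⟨z, hz, rfl⟩
        simp only [mem_preimage]
        convert hz using 1
        field_simp; ring
    rw [this]
    exact hC.image _ hinvc.continuousOn
  refine no_crossing (hAo.preimage hcont) (hpre A hAc) (hBo.preimage hcont) (hpre B hBc) ?_ ?_ ?_
    (x := Real.cos φ) (y := Real.sin φ) (e := exp (α * I)) ?_ ?_ ?_ hr ?_ ?_ ?_ ?_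
  · rw [Set.disjoint_left]
    intro w h1 h2
    exact lt_asymm (hA _ h1) (hB _ h2)
  · intro h
    have := hA _ h
    simp [hp] at this
  · intro h
    have := hB _ h
    simp [hp] at this
  · exact Real.cos_pos_of_mem_Ioo ⟨by linarith, hφ1⟩
  · exact Real.sin_pos_of_pos_of_lt_pi hφ0 (by linarith)
  · rw [exp_ofReal_mul_I_re, exp_ofReal_mul_I_im, ← Real.sin_sub, hαφ]
    exact Real.sin_pos_of_pos_of_lt_pi (by linarith) (by linarith)
  · intro t h1 h2
    simpa using (hrs ⟨h1, h2⟩).1.1.1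
  · intro t h1 h2
    exact (hrs ⟨h1, h2⟩).1.1.2
  · intro t h1 h2
    have := (hrs ⟨h1, h2⟩).1.2
    rw [exp_mul_I, ← ofReal_cos, ← ofReal_sin] at this
    exact this
  · intro t h1 h2
    have := (hrs ⟨h1, h2⟩).2
    rw [exp_mul_I, ← ofReal_cos, ← ofReal_sin, Real.cos_neg, Real.sin_neg] at this
    simp only [mem_preimage]
    convert this using 4
    push_cast; ring

lemma arc_isPreconnected {w : ℂ} (hw : w ≠ 0) (c : ℝ) :
    IsPreconnected {z ∈ sphere (0 : ℂ) 1 | c < ((starRingEnd ℂ) w * z).re} := by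
  have hn : 0 < ‖w‖ := norm_pos_iff.2 hw
  have hnC : (‖w‖ : ℂ) ≠ 0 := by exact_mod_cast hn.ne'
  have hcw : (starRingEnd ℂ) w * w = (‖w‖ : ℂ) * ‖w‖ := by
    rw [mul_comm, Complex.mul_conj, Complex.normSq_eq_norm_sq]; push_cast; ring
  have hre : ∀ θ : ℝ, ((starRingEnd ℂ) w * (w / ‖w‖ * exp (θ * I))).re = ‖w‖ * Real.cos θ := by
    intro θ
    have : (starRingEnd ℂ) w * (w / ‖w‖ * exp (θ * I)) = (‖w‖ : ℂ) * exp (θ * I) := by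
      field_simp
      rw [hcw]; ring
    rw [this, re_ofReal_mul, exp_ofReal_mul_I_re]
  set T : Set ℝ := {θ | θ ∈ Icc (-Real.pi) Real.pi ∧ c < ‖w‖ * Real.cos θ} with hT
  have himg : {z ∈ sphere (0 : ℂ) 1 | c < ((starRingEnd ℂ) w * z).re} =
      (fun θ : ℝ => w / ‖w‖ * exp (θ * I)) '' T := by
    ext z
    constructor
    · rintro ⟨hz, hzc⟩
      rw [mem_sphere_zero_iff_norm] at hz
      set v := z * ‖w‖ / w with hv
      have hvn : ‖v‖ = 1 := by
        rw [hv, norm_div, norm_mul, hz, norm_real, norm_norm, one_mul, div_self hn.ne']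
      have hve : exp (arg v * I) = v := by
        have := norm_mul_exp_arg_mul_I v
        rwa [hvn, ofReal_one, one_mul] at this
      have hzv : w / ‖w‖ * exp (arg v * I) = z := by
        rw [hve, hv]; field_simp
      refine ⟨arg v, ⟨⟨(neg_pi_lt_arg v).le, arg_le_pi v⟩, ?_⟩, hzv⟩
      rw [← hre, hzv]
      exact hzc
    · rintro ⟨θ, hθ, rfl⟩
      refine ⟨?_, ?_⟩
      · rw [mem_sphere_zero_iff_norm, norm_mul, norm_exp_ofReal_mul_I, norm_div, norm_real,
          norm_norm, div_self hn.ne', mul_one]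
      · rw [hre]; exact hθ.2
  rw [himg]
  refine IsPreconnected.image ?_ _ (by fun_prop)
  refine Set.OrdConnected.isPreconnected ⟨?_⟩
  rintro a ⟨ha, hac⟩ b ⟨hb, hbc⟩ x ⟨hax, hxb⟩
  refine ⟨⟨ha.1.trans hax, hxb.trans hb.2⟩, ?_⟩
  rcases le_total 0 x with h | h
  · have : Real.cos b ≤ Real.cos x := Real.cos_le_cos_of_nonneg_of_le_pi h hb.2 hxb
    nlinarith
  · have : Real.cos (-a) ≤ Real.cos (-x) :=
      Real.cos_le_cos_of_nonneg_of_le_pi (by linarith) (by linarith [ha.1]) (by linarith)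
    rw [Real.cos_neg, Real.cos_neg] at this
    nlinarith

open InnerProductSpace Topology in
lemma not_locally_const {Ω : Set ℂ} (hΩc : IsPreconnected Ω) {h : ℂ → ℝ}
    (hh : HarmonicOnNhd h Ω) (hc : ContinuousOn h (closure Ω))
    {a b : ℂ} (ha : a ∈ closure Ω) (hb : b ∈ closure Ω) (hab : h a ≠ h b) :
    ∀ p ∈ Ω, ¬ ∀ᶠ z in 𝓝 p, h z = h p := by
  intro p hp hev
  have han : AnalyticOnNhd ℝ h Ω := fun z hz => HarmonicAt.analyticAt (hh z hz)
  have heq : EqOn h (fun _ => h p) Ω :=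
    han.eqOn_of_preconnected_of_eventuallyEq analyticOnNhd_const hΩc hp hev
  have heq' : EqOn h (fun _ => h p) (closure Ω) :=
    heq.of_subset_closure hc continuousOn_const subset_closure subset_rfl
  exact hab ((heq' ha).trans (heq' hb).symm)

open InnerProductSpace Topology in
lemma main_critical {Ω : Set ℂ} (hΩo : IsOpen Ω) (hΩb : Bornology.IsBounded Ω)
    {h : ℂ → ℝ} (hh : HarmonicOnNhd h Ω) (hc : ContinuousOn h (closure Ω))
    (hlc : ∀ p ∈ Ω, ¬ ∀ᶠ z in 𝓝 p, h z = h p)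
    (harc : ∀ c, IsPreconnected (frontier Ω ∩ {z | c < h z}))
    (harc' : ∀ c, IsPreconnected (frontier Ω ∩ {z | h z < c})) :
    ∀ p ∈ Ω, fderiv ℝ h p ≠ 0 := by
  intro p hp hder
  obtain ⟨H₀, hH₀⟩ := ContinuousMap.exists_restrict_eq isClosed_closure
    (⟨(closure Ω).domRestrict (fun z => h z - h p), (hc.sub continuousOn_const).domRestrict⟩ :
      C(closure Ω, ℝ))
  set H : ℂ → ℝ := fun z => H₀ z with hHdef
  have hHc : Continuous H := H₀.continuous
  have hHeq : ∀ z ∈ closure Ω, H z = h z - h p := fun z hz =>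
    congrArg (fun f : C(closure Ω, ℝ) => f ⟨z, hz⟩) hH₀
  have hHev : ∀ y ∈ Ω, H =ᶠ[𝓝 y] fun z => h z - h p := by
    intro y hy
    filter_upwards [hΩo.mem_nhds hy] with z hz
    exact hHeq z (subset_closure hz)
  have hHharm : ∀ y ∈ Ω, HarmonicAt H y := by
    intro y hy
    rw [harmonicAt_congr_nhds (hHev y hy)]
    exact (hh y hy).sub (harmonicAt_const _)
  have hHlc : ∀ y ∈ Ω, ¬ ∀ᶠ z in 𝓝 y, H z = H y := by
    intro y hy hev
    apply hlc y hy
    filter_upwards [hev, hHev y hy] with z h1 h2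
    rw [h2, (hHev y hy).self_of_nhds] at h1
    linarith
  have hmax : ∀ y ∈ Ω, ¬ IsLocalMax H y := fun y hy hm =>
    hHlc y hy (harmonic_eventually_const (hHharm y hy) hm)
  have hmax' : ∀ y ∈ Ω, ¬ IsLocalMax (fun z => - H z) y := by
    intro y hy hm
    apply hHlc y hy
    filter_upwards [harmonic_eventually_const (hHharm y hy).neg hm] with z hz
    simpa using hz
  have hfr : frontier Ω ∩ {z | 0 < H z} = frontier Ω ∩ {z | h p < h z} := by
    ext z
    simp only [mem_inter_iff, mem_setOf_eq, and_congr_right_iff]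
    intro hz
    rw [hHeq z (frontier_subset_closure hz), sub_pos]
  have hfr' : frontier Ω ∩ {z | 0 < - H z} = frontier Ω ∩ {z | h z < h p} := by
    ext z
    simp only [mem_inter_iff, mem_setOf_eq, and_congr_right_iff]
    intro hz
    rw [hHeq z (frontier_subset_closure hz), neg_sub, sub_pos]
  have hHp : H p = 0 := by rw [hHeq p (subset_closure hp), sub_self]
  have hnot := hHlc p hp
  rw [hHp] at hnot
  have hex : ∃ A : Set ℂ, IsOpen A ∧ IsPreconnected A ∧ (∀ z ∈ A, 0 < H z) ∧
      ∀ z ∈ Ω, 0 < H z → z ∈ A := by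
    have hPo : IsOpen {z | 0 < H z} := isOpen_lt continuous_const hHc
    by_cases hx : ∃ x ∈ Ω, 0 < H x
    · obtain ⟨x, hxΩ, hxp⟩ := hx
      refine ⟨connectedComponentIn {z | 0 < H z} x, hPo.connectedComponentIn,
        isPreconnected_connectedComponentIn, fun z hz => ?_, ?_⟩
      · have hm : z ∈ {z | 0 < H z} := connectedComponentIn_subset _ _ hz
        exact hm
      intro z hz hzp
      rw [component_eq hΩo hΩb hHc hmax (hfr ▸ harc _) hxΩ hz hxp hzp]
      exact mem_connectedComponentIn hzp
    · push Not at hx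
      exact ⟨∅, isOpen_empty, isPreconnected_empty, by simp, fun z hz hzp =>
        absurd hzp (not_lt.2 (hx z hz))⟩
  have hex' : ∃ B : Set ℂ, IsOpen B ∧ IsPreconnected B ∧ (∀ z ∈ B, H z < 0) ∧
      ∀ z ∈ Ω, H z < 0 → z ∈ B := by
    have hPo : IsOpen {z | 0 < - H z} := isOpen_lt continuous_const hHc.neg
    by_cases hx : ∃ x ∈ Ω, 0 < - H x
    · obtain ⟨x, hxΩ, hxp⟩ := hx
      refine ⟨connectedComponentIn {z | 0 < - H z} x, hPo.connectedComponentIn,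
        isPreconnected_connectedComponentIn,
        fun z hz => ?_, ?_⟩
      · have hm : z ∈ {z | 0 < - H z} := connectedComponentIn_subset _ _ hz
        exact neg_pos.1 hm
      intro z hz hzp
      have hzp' : 0 < - H z := neg_pos.2 hzp
      rw [component_eq (H := fun z => - H z) hΩo hΩb hHc.neg hmax' (hfr' ▸ harc' _)
        hxΩ hz hxp hzp']
      exact mem_connectedComponentIn hzp'
    · push Not at hx
      exact ⟨∅, isOpen_empty, isPreconnected_empty, by simp, fun z hz hzp =>
        absurd (neg_pos.2 hzp) (not_lt.2 (hx z hz))⟩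
  obtain ⟨A, hAo, hAc, hA, hA'⟩ := hex
  obtain ⟨B, hBo, hBc, hB, hB'⟩ := hex'
  refine critical_false (hHharm p hp) hHp ?_ hnot hAo hAc hBo hBc hA hB
    (Filter.mem_of_superset (hΩo.mem_nhds hp) hA') (Filter.mem_of_superset (hΩo.mem_nhds hp) hB')
  rw [(hHev p hp).fderiv_eq, fderiv_sub_const, hder]

open Topology in
/-- A proper local homeomorphism onto the disk is injective. -/
lemma injOn_of_local {Ω : Set ℂ} (hΩo : IsOpen Ω) (hΩb : Bornology.IsBounded Ω)
    (hΩpc : PathConnectedSpace Ω)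
    {g : ℂ → ℂ} (hgc : ContinuousOn g (closure Ω)) (hloc : IsLocalHomeomorphOn g Ω)
    (hmaps : MapsTo g Ω (ball 0 1)) (hfr : ∀ z ∈ frontier Ω, g z ∉ ball (0 : ℂ) 1) :
    InjOn g Ω := by
  set f : Ω → ball (0 : ℂ) 1 := hmaps.restrict g Ω _ with hf
  have hfc : Continuous f := (hgc.mono subset_closure).mapsToRestrict hmaps
  have hlh : IsLocalHomeomorph f := by
    suffices hgf : IsLocalHomeomorph ((Subtype.val : ball (0 : ℂ) 1 → ℂ) ∘ f) from
      hgf.of_comp isOpen_ball.isOpenEmbedding_subtypeVal.isLocalHomeomorph hfc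
    have h1 : IsLocalHomeomorphOn (Subtype.val : Ω → ℂ) univ :=
      hΩo.isOpenEmbedding_subtypeVal.isLocalHomeomorph.isLocalHomeomorphOn
    have h2 := hloc.comp h1 (fun x _ => x.2)
    exact isLocalHomeomorph_iff_isLocalHomeomorphOn_univ.2 h2
  have hprop : IsProperMap f := by
    rw [isProperMap_iff_isCompact_preimage]
    refine ⟨hfc, fun K hK => ?_⟩
    rw [Subtype.isCompact_iff]
    have hKc : IsCompact (Subtype.val '' K : Set ℂ) := hK.image continuous_subtype_val
    have : (Subtype.val '' (f ⁻¹' K) : Set ℂ) = closure Ω ∩ g ⁻¹' (Subtype.val '' K) := by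
      ext z
      constructor
      · rintro ⟨y, hy, rfl⟩
        exact ⟨subset_closure y.2, ⟨f y, hy, rfl⟩⟩
      · rintro ⟨hz, ⟨y, hy, hyz⟩⟩
        have hzΩ : z ∈ Ω := by
          by_contra hn
          apply hfr z
          · rw [hΩo.frontier_eq]; exact ⟨hz, hn⟩
          · rw [← hyz]; exact y.2
        refine ⟨⟨z, hzΩ⟩, ?_, rfl⟩
        have : f ⟨z, hzΩ⟩ = y := Subtype.ext hyz.symm
        rw [mem_preimage, this]; exact hy
    rw [this]
    exact hΩb.isCompact_closure.of_isClosed_subset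
      (hgc.preimage_isClosed_of_isClosed isClosed_closure hKc.isClosed) inter_subset_left
  have hcov : IsCoveringMap f := by
    rw [isCoveringMap_iff_isCoveringMapOn_univ]
    refine hprop.isClosedMap.isCoveringMapOn_of_isLocalHomeomorphOn ?_ hlh.isLocalHomeomorphOn
    intro x _
    refine (hprop.isCompact_preimage isCompact_singleton).finite ?_
    refine .of_openPartialHomeomorph f subset_rfl fun e he => ?_
    obtain ⟨φ, hφ, hφf⟩ := hlh e
    exact ⟨φ, hφ, hφf.symm⟩
  have : SimplyConnectedSpace (ball (0 : ℂ) 1) := by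
    have : ContractibleSpace (ball (0 : ℂ) 1) :=
      (convex_ball (0 : ℂ) 1).contractibleSpace ⟨0, mem_ball_self one_pos⟩
    infer_instance
  intro a ha b hb hab
  have hfab : f ⟨a, ha⟩ = f ⟨b, hb⟩ := Subtype.ext hab
  obtain ⟨P⟩ := hΩpc.joined ⟨a, ha⟩ ⟨b, hb⟩
  have h1 := hcov.monodromy_eq_of_map_eq (x := f ⟨a, ha⟩) (y := f ⟨a, ha⟩) (γ := .refl _)
    (ex := ⟨⟨a, ha⟩, rfl⟩) (ey := ⟨⟨b, hb⟩, hfab.symm⟩) (.mk P) (Subsingleton.elim _ _)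
  rw [hcov.monodromy_refl] at h1
  have := congrArg (fun e => (e.1.1 : ℂ)) h1
  exact this

open InnerProductSpace Topology

theorem stmt_2 (Ω : Set ℂ) (hΩo : IsOpen Ω) (hΩb : Bornology.IsBounded Ω)
    (hΩsc : SimplyConnectedSpace Ω)
    (γ : ℂ → ℂ) (hγinj : Set.InjOn γ (Metric.sphere (0 : ℂ) 1))
    (hγC2 : ContDiffOn ℝ 2 γ (Metric.sphere (0 : ℂ) 1))
    (hΓ : frontier Ω = γ '' Metric.sphere (0 : ℂ) 1)
    (g : ℂ → ℂ) (hgc : ContinuousOn g (closure Ω))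
    (hgre : HarmonicOnSet (fun z => (g z).re) Ω)
    (hgim : HarmonicOnSet (fun z => (g z).im) Ω)
    (hgb : ∀ z ∈ Metric.sphere (0 : ℂ) 1, g (γ z) = z) :
    ContDiffOn ℝ 2 g Ω ∧ Set.InjOn g Ω ∧ g '' Ω = Metric.ball (0 : ℂ) 1 ∧
      ∃ ginv : ℂ → ℂ,
        ContDiffOn ℝ 2 ginv (Metric.ball (0 : ℂ) 1) ∧
        (∀ p ∈ Ω, ginv (g p) = p) ∧
        (∀ w ∈ Metric.ball (0 : ℂ) 1, g (ginv w) = w) := by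
  have hpc : PathConnectedSpace Ω := inferInstance
  have hΩc : IsPreconnected Ω := (isPathConnected_iff_pathConnectedSpace.2 hpc).isConnected.2
  have hΩne : Ω.Nonempty := (isPathConnected_iff_pathConnectedSpace.2 hpc).nonempty
  have hgC2 : ContDiffOn ℝ 2 g Ω := by
    have h1 := ofRealCLM.contDiff.comp_contDiffOn hgre.1
    have h2 := ofRealCLM.contDiff.comp_contDiffOn hgim.1
    refine (h1.add (h2.mul (contDiffOn_const (c := I)))).congr fun z _ => ?_
    simp [re_add_im]
  have hgAt : ∀ p ∈ Ω, ContDiffAt ℝ 2 g p := fun p hp => hgC2.contDiffAt (hΩo.mem_nhds hp)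
  have hHre := hgre.harmonicOnNhd hΩo
  have hHim := hgim.harmonicOnNhd hΩo
  -- the functions `Re (conj w * g)`
  set h : ℂ → ℂ → ℝ := fun w z => ((starRingEnd ℂ) w * g z).re with hh
  have hharm : ∀ w, HarmonicOnNhd (h w) Ω := by
    intro w
    have := (hHre.const_smul (c := w.re)).add (hHim.const_smul (c := w.im))
    convert this using 1
    funext z
    simp [hh]
  have hcont : ∀ w, ContinuousOn (h w) (closure Ω) := fun w =>
    continuous_re.comp_continuousOn (continuousOn_const.mul hgc)
  have hbd : ∀ w, ∀ z ∈ sphere (0 : ℂ) 1, h w (γ z) = ((starRingEnd ℂ) w * z).re := by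
    intro w z hz
    simp only [hh, hgb z hz]
  have hγcl : ∀ z ∈ sphere (0 : ℂ) 1, γ z ∈ closure Ω := fun z hz =>
    frontier_subset_closure (hΓ ▸ mem_image_of_mem γ hz)
  have hlc : ∀ w, w ≠ 0 → ∀ p ∈ Ω, ¬ ∀ᶠ z in 𝓝 p, h w z = h w p := by
    intro w hw
    have hn : 0 < ‖w‖ := norm_pos_iff.2 hw
    have hnC : (‖w‖ : ℂ) ≠ 0 := by exact_mod_cast hn.ne'
    have m1 : w / ‖w‖ ∈ sphere (0 : ℂ) 1 := by
      rw [mem_sphere_zero_iff_norm, norm_div, norm_real, norm_norm, div_self hn.ne']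
    have m2 : -(w / ‖w‖) ∈ sphere (0 : ℂ) 1 := by
      rw [mem_sphere_zero_iff_norm, norm_neg]; exact mem_sphere_zero_iff_norm.1 m1
    refine not_locally_const hΩc (hharm w) (hcont w) (hγcl _ m1) (hγcl _ m2) ?_
    rw [hbd _ _ m1, hbd _ _ m2]
    have : (starRingEnd ℂ) w * (w / ‖w‖) = ‖w‖ := by
      have hcw : (starRingEnd ℂ) w * w = (‖w‖ : ℂ) * ‖w‖ := by
        rw [mul_comm, Complex.mul_conj, Complex.normSq_eq_norm_sq]; push_cast; ring
      rw [← mul_div_assoc, hcw]; field_simp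
    rw [mul_neg, this, neg_re, ofReal_re]
    intro h'
    linarith
  have hγc : ContinuousOn γ (sphere (0 : ℂ) 1) := hγC2.continuousOn
  have harc : ∀ w, w ≠ 0 → ∀ c, IsPreconnected (frontier Ω ∩ {z | c < h w z}) := by
    intro w hw c
    have : frontier Ω ∩ {z | c < h w z} =
        γ '' {z ∈ sphere (0 : ℂ) 1 | c < ((starRingEnd ℂ) w * z).re} := by
      rw [hΓ]
      ext z
      constructor
      · rintro ⟨⟨y, hy, rfl⟩, hz⟩
        refine ⟨y, ⟨hy, ?_⟩, rfl⟩
        rw [← hbd w y hy]; exact hz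
      · rintro ⟨y, ⟨hy, hyc⟩, rfl⟩
        refine ⟨⟨y, hy, rfl⟩, ?_⟩
        rw [mem_setOf_eq, hbd w y hy]; exact hyc
    rw [this]
    exact (arc_isPreconnected hw c).image _ (hγc.mono fun z hz => hz.1)
  have harc' : ∀ w, w ≠ 0 → ∀ c, IsPreconnected (frontier Ω ∩ {z | h w z < c}) := by
    intro w hw c
    have : {z | h w z < c} = {z | -c < h (-w) z} := by
      ext z
      simp only [mem_setOf_eq, hh, map_neg, neg_mul, neg_re, neg_lt_neg_iff]
    rw [this]
    exact harc (-w) (neg_ne_zero.2 hw) (-c)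
  have hcrit : ∀ w, w ≠ 0 → ∀ p ∈ Ω, fderiv ℝ (h w) p ≠ 0 := fun w hw =>
    main_critical hΩo hΩb (hharm w) (hcont w) (hlc w hw) (harc w hw) (harc' w hw)
  -- the differential is invertible
  have hequiv : ∀ p ∈ Ω, ∃ f' : ℂ ≃L[ℝ] ℂ, HasFDerivAt g (f' : ℂ →L[ℝ] ℂ) p := by
    intro p hp
    have hgd : DifferentiableAt ℝ g p := (hgAt p hp).differentiableAt (by norm_num)
    have hsurj : LinearMap.range (fderiv ℝ g p : ℂ →ₗ[ℝ] ℂ) = ⊤ := by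
      by_contra hne
      obtain ⟨f, hf0, hf⟩ := Submodule.exists_le_ker_of_lt_top _ (lt_top_iff_ne_top.2 hne)
      have hfz : ∀ z : ℂ, f z = f 1 * z.re + f I * z.im := by
        intro z
        conv_lhs => rw [show z = z.re • (1 : ℂ) + z.im • I by simp [re_add_im]]
        rw [map_add, map_smul, map_smul]
        simp only [smul_eq_mul]; ring
      have hw : (⟨f 1, f I⟩ : ℂ) ≠ 0 := by
        intro h0
        apply hf0
        ext z
        have h1 := congrArg Complex.re h0
        have h2 := congrArg Complex.im h0
        simp at h1 h2
        rw [hfz, h1, h2]; simp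
      apply hcrit _ hw p hp
      have h1 : HasFDerivAt (h ⟨f 1, f I⟩)
          ((LinearMap.toContinuousLinearMap f).comp (fderiv ℝ g p)) p := by
        have := (LinearMap.toContinuousLinearMap f).hasFDerivAt.comp p hgd.hasFDerivAt
        refine this.congr_of_eventuallyEq (Filter.Eventually.of_forall fun z => ?_)
        simp [hh, hfz (g z)]
      rw [h1.fderiv]
      ext1 v
      have : f (fderiv ℝ g p v) = 0 := hf ⟨v, rfl⟩
      simpa using this
    have hs : Function.Surjective (fderiv ℝ g p : ℂ →ₗ[ℝ] ℂ) := LinearMap.range_eq_top.1 hsurj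
    have hi : Function.Injective (fderiv ℝ g p : ℂ →ₗ[ℝ] ℂ) :=
      LinearMap.injective_iff_surjective.2 hs
    refine ⟨(LinearEquiv.ofBijective (fderiv ℝ g p : ℂ →ₗ[ℝ] ℂ)
      ⟨hi, hs⟩).toContinuousLinearEquiv, ?_⟩
    convert hgd.hasFDerivAt using 1
    exact ContinuousLinearMap.ext fun v => rfl
  choose! f' hf' using hequiv
  have hloc : IsLocalHomeomorphOn g Ω := by
    intro p hp
    exact ⟨(hgAt p hp).toOpenPartialHomeomorph g (hf' p hp) (by norm_num),
      (hgAt p hp).mem_toOpenPartialHomeomorph_source (hf' p hp) (by norm_num), rfl⟩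
  -- the image lies in the disk
  have hmaps : MapsTo g Ω (ball 0 1) := by
    intro p hp
    rw [mem_ball_zero_iff]
    by_cases hw : g p = 0
    · simp [hw]
    have hn : 0 < ‖g p‖ := norm_pos_iff.2 hw
    obtain ⟨y, hy, hymax⟩ := hΩb.isCompact_closure.exists_isMaxOn (hΩne.mono subset_closure)
      (hcont (g p))
    have hnomax : ∀ q ∈ Ω, ¬ ∀ z ∈ Ω, h (g p) z ≤ h (g p) q := by
      intro q hq hmax
      refine hlc _ hw q hq (harmonic_eventually_const (hharm _ q hq) ?_)
      filter_upwards [hΩo.mem_nhds hq] with z hz using hmax z hz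
    have hyΩ : y ∉ Ω := fun hyΩ => hnomax y hyΩ fun z hz => hymax (subset_closure hz)
    have hyfr : y ∈ frontier Ω := by rw [hΩo.frontier_eq]; exact ⟨hy, hyΩ⟩
    rw [hΓ] at hyfr
    obtain ⟨s, hs, rfl⟩ := hyfr
    have h1 : h (g p) p < h (g p) (γ s) := by
      by_contra! hle
      exact hnomax p hp fun z hz => (hymax (subset_closure hz)).trans hle
    have h2 : h (g p) (γ s) ≤ ‖g p‖ := by
      rw [hbd _ _ hs]
      refine (re_le_norm _).trans ?_
      rw [norm_mul, norm_conj, mem_sphere_zero_iff_norm.1 hs, mul_one]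
    have h3 : h (g p) p = ‖g p‖ * ‖g p‖ := by
      simp only [hh]
      rw [mul_comm, Complex.mul_conj, Complex.normSq_eq_norm_sq, ofReal_re]; ring
    rw [h3] at h1
    nlinarith
  have hfr : ∀ z ∈ frontier Ω, g z ∉ ball (0 : ℂ) 1 := by
    intro z hz
    rw [hΓ] at hz
    obtain ⟨s, hs, rfl⟩ := hz
    rw [hgb s hs, mem_ball_zero_iff, mem_sphere_zero_iff_norm.1 hs]
    exact lt_irrefl _
  have hinj : InjOn g Ω := injOn_of_local hΩo hΩb hpc hgc hloc hmaps hfr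
  -- surjectivity
  have himg : g '' Ω = ball (0 : ℂ) 1 := by
    refine Subset.antisymm hmaps.image_subset ?_
    have hopen : IsOpen (g '' Ω) := by
      rw [isOpen_iff_mem_nhds]
      rintro _ ⟨p, hp, rfl⟩
      rw [← (hloc.map_nhds_eq hp)]
      exact Filter.image_mem_map (hΩo.mem_nhds hp)
    have hcl : IsClosed (g '' closure Ω) :=
      (hΩb.isCompact_closure.image_of_continuousOn hgc).isClosed
    have hsub : ball (0 : ℂ) 1 ∩ g '' closure Ω ⊆ g '' Ω := by
      rintro _ ⟨hb, ⟨z, hz, rfl⟩⟩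
      by_cases hzΩ : z ∈ Ω
      · exact mem_image_of_mem g hzΩ
      · exact absurd hb (hfr z (by rw [hΩo.frontier_eq]; exact ⟨hz, hzΩ⟩))
    refine (convex_ball (0 : ℂ) 1).isPreconnected.subset_of_closure_inter_subset hopen ?_ ?_
    · obtain ⟨p, hp⟩ := hΩne
      exact ⟨g p, hmaps hp, mem_image_of_mem g hp⟩
    · rintro z ⟨hz, hzb⟩
      refine hsub ⟨hzb, ?_⟩
      exact closure_minimal (image_mono subset_closure) hcl hz
  refine ⟨hgC2, hinj, himg, Function.invFunOn g Ω, ?_, fun p hp => hinj.leftInvOn_invFunOn hp, ?_⟩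
  · intro w hw
    rw [← himg] at hw
    obtain ⟨p, hp, rfl⟩ := hw
    have hli := (hgAt p hp).to_localInverse (hf' p hp) (by norm_num)
    refine (hli.congr_of_eventuallyEq ?_).contDiffWithinAt
    set φ := (hgAt p hp).toOpenPartialHomeomorph g (hf' p hp) (by norm_num) with hφ
    have hps : p ∈ φ.source :=
      (hgAt p hp).mem_toOpenPartialHomeomorph_source (hf' p hp) (by norm_num)
    have hgp : g p ∈ φ.target := φ.map_source hps
    have h1 : Filter.Tendsto φ.symm (𝓝 (g p)) (𝓝 p) := φ.tendsto_symm hps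
    filter_upwards [h1.eventually (hΩo.mem_nhds hp), φ.open_target.mem_nhds hgp] with w hw1 hw2
    have h2 : g (φ.symm w) = w := φ.right_inv hw2
    change Function.invFunOn g Ω w = φ.symm w
    conv_lhs => rw [← h2]
    exact hinj.leftInvOn_invFunOn hw1
  · intro w hw
    rw [← himg] at hw
    exact Function.invFunOn_eq hw
end

section
/- Let Ω ⊂ ℂ be a bounded, open, simply connected set whose frontier Γ = ∂Ω equals the image of an injective, twice continuously differentiable map γ : S¹ → ℂ. Fix φ ∈ [0, 2π) and let u : closure(Ω) → ℝ be continuous on closure(Ω), harmonic on Ω, with boundary values u(γ(e^{iθ})) = cos(θ − φ) for all θ. Then u has no critical points in Ω: the gradient ∇u(p) ≠ 0 for every p ∈ Ω. -/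
open Complex Metric Set

section Helpers
open Filter Topology

noncomputable def csq (w : ℂ) : ℂ := Complex.exp (Complex.log w / 2)

lemma csq_sq {w : ℂ} (hw : w ≠ 0) : csq w ^ 2 = w := by
  rw [csq, ← Complex.exp_nat_mul]
  rw [show ((2:ℕ):ℂ) * (Complex.log w / 2) = Complex.log w by push_cast; ring, Complex.exp_log hw]

lemma csq_ne (w : ℂ) : csq w ≠ 0 := Complex.exp_ne_zero _

lemma csq_continuousAt {w : ℂ} (hw : w ∈ slitPlane) : ContinuousAt csq w := by
  unfold csq
  exact Complex.continuous_exp.continuousAt.comp ((continuousAt_clog hw).div_const 2)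

lemma csq_polar {w : ℂ} (s θ : ℝ) (h1 : -Real.pi < θ) (h2 : θ ≤ Real.pi)
    (hw : w = Complex.exp (s + θ * I)) : csq w = Complex.exp (s / 2 + θ / 2 * I) := by
  rw [csq, hw, Complex.log_exp (by simpa using h1) (by simpa using h2)]
  congr 1; ring

/-- Square root of `(z-a)/(z-b)` exists off a connected set containing `a`, `b`. -/
lemma exists_sqrt_ratio {X K S : Set ℂ} (hK : IsClosed K) (hXK : X ⊆ K) (hS : IsPreconnected S)
    (hSK : ∀ a ∈ S, a ∉ K) {a b : ℂ} (ha : a ∈ S) (hb : b ∈ S) :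
    ∃ q : ℂ → ℂ, ContinuousOn q X ∧ ∀ z ∈ X, q z ^ 2 * (z - b) = z - a := by
  have hne : ∀ a ∈ S, ∀ z ∈ X, z - a ≠ 0 := fun a ha z hz h =>
    hSK a ha (by rw [← sub_eq_zero.1 h]; exact hXK hz)
  have loc : ∀ a ∈ S, ∀ᶠ a' in 𝓝[S] a, ∃ q : ℂ → ℂ, ContinuousOn q X ∧
      ∀ z ∈ X, q z ^ 2 * (z - a) = z - a' := by
    intro a ha
    obtain ⟨ε, hε, hb⟩ := Metric.isOpen_iff.1 hK.isOpen_compl a (hSK a ha)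
    filter_upwards [mem_nhdsWithin_of_mem_nhds (Metric.ball_mem_nhds a hε)] with a' ha'
    have key : ∀ z ∈ X, (z - a') / (z - a) ∈ slitPlane := by
      intro z hz
      have h1 : ε ≤ ‖z - a‖ := by
        by_contra h
        exact hb (by simpa [dist_eq_norm] using h) (hXK hz)
      have h2 : ‖a' - a‖ < ε := by simpa [dist_eq_norm] using ha'
      have h0 := hne a ha z hz
      have : (z - a') / (z - a) = 1 + -(a' - a) / (z - a) := by field_simp; ring
      rw [this]
      apply mem_slitPlane_of_norm_lt_one
      rw [norm_div, norm_neg, div_lt_one (by linarith)]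
      linarith
    refine ⟨fun z => csq ((z - a') / (z - a)), ?_, ?_⟩
    · intro z hz
      have hc : ContinuousAt (fun z => (z - a') / (z - a)) z :=
        ContinuousAt.div (by fun_prop) (by fun_prop) (hne a ha z hz)
      exact (ContinuousAt.comp (f := fun z => (z - a') / (z - a)) (csq_continuousAt (key z hz)) hc).continuousWithinAt
    · intro z hz
      have h0 := hne a ha z hz
      rw [csq_sq (slitPlane_ne_zero (key z hz))]
      field_simp
  refine hS.induction₂ (fun b a => ∃ q : ℂ → ℂ, ContinuousOn q X ∧
      ∀ z ∈ X, q z ^ 2 * (z - b) = z - a) loc ?_ ?_ hb ha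
  · rintro x y w hx hy hw ⟨q, hq, hq'⟩ ⟨r, hr, hr'⟩
    refine ⟨fun z => q z * r z, hq.mul hr, fun z hz => ?_⟩
    rw [← hr' z hz, ← hq' z hz]; ring
  · rintro x y hx hy ⟨q, hq, hq'⟩
    have hq0 : ∀ z ∈ X, q z ≠ 0 := by
      intro z hz h
      have := hq' z hz
      rw [h] at this
      exact hne y hy z hz (by rw [← this]; ring)
    refine ⟨fun z => (q z)⁻¹, hq.inv₀ hq0, fun z hz => ?_⟩
    rw [← hq' z hz]
    have := hq0 z hz
    field_simp

lemma branch_on {S : Set ℂ} (hS : IsPreconnected S) {a b c κ k : ℂ} (hκ : κ ≠ 0)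
    (hck : c * k ^ 2 = κ) (h1 : ∀ z ∈ S, c * (z - a) ∈ slitPlane)
    (h2 : ∀ z ∈ S, κ * (z - b) ∈ slitPlane) {q : ℂ → ℂ} (hq : ContinuousOn q S)
    (hq2 : ∀ z ∈ S, q z ^ 2 * (z - b) = z - a) :
    (∀ z ∈ S, q z = csq (c * (z - a)) / csq (κ * (z - b)) * k) ∨
    (∀ z ∈ S, q z = - (csq (c * (z - a)) / csq (κ * (z - b)) * k)) := by
  have hk : k ≠ 0 := by rintro rfl; apply hκ; rw [← hck]; ring
  refine hS.eq_or_eq_neg_of_sq_eq (g := fun z => csq (c * (z - a)) / csq (κ * (z - b)) * k)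
    hq ?_ ?_ ?_
  · intro z hz
    have e1 : ContinuousAt (fun z => csq (c * (z - a))) z :=
      ContinuousAt.comp (f := fun z => c * (z - a)) (csq_continuousAt (h1 z hz)) (by fun_prop)
    have e2 : ContinuousAt (fun z => csq (κ * (z - b))) z :=
      ContinuousAt.comp (f := fun z => κ * (z - b)) (csq_continuousAt (h2 z hz)) (by fun_prop)
    exact ((e1.div e2 (csq_ne _)).mul continuousAt_const).continuousWithinAt
  · intro z hz
    have n1 := slitPlane_ne_zero (h1 z hz)
    have n2 := slitPlane_ne_zero (h2 z hz)
    have n3 : z - b ≠ 0 := right_ne_zero_of_mul n2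
    have := hq2 z hz
    simp only [Pi.pow_apply, mul_pow, div_pow]
    rw [csq_sq n1, csq_sq n2]
    field_simp
    rw [← hck]
    linear_combination (c * k ^ 2) * this
  · intro z hz
    exact mul_ne_zero (div_ne_zero (csq_ne _) (csq_ne _)) hk

def seg (w : ℂ) (R : ℝ) : Set ℂ := (fun x : ℝ => (x : ℂ) * w) '' Icc 0 R

lemma seg_preconn (w : ℂ) (R : ℝ) : IsPreconnected (seg w R) :=
  isPreconnected_Icc.image _ (by fun_prop)

lemma expI_re (θ : ℝ) : (Complex.exp (θ * I)).re = Real.cos θ := Complex.exp_ofReal_mul_I_re θ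
lemma expI_im (θ : ℝ) : (Complex.exp (θ * I)).im = Real.sin θ := Complex.exp_ofReal_mul_I_im θ

lemma E_lim {c κ k s d : ℂ} (h1 : c * s ∈ slitPlane) (h2 : κ * s ∈ slitPlane)
    (h : csq (c * s) / csq (κ * s) * k = 1) :
    ∀ᶠ ρ : ℝ in 𝓝[>] 0, 0 < (csq (c * (s - ρ)) / csq (κ * (s - ρ * d)) * k).re := by
  have e1 : ContinuousAt (fun ρ : ℝ => csq (c * (s - ρ))) 0 :=
    ContinuousAt.comp (f := fun ρ : ℝ => c * (s - ρ)) (csq_continuousAt (by simpa using h1))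
      (by fun_prop)
  have e2 : ContinuousAt (fun ρ : ℝ => csq (κ * (s - ρ * d))) 0 :=
    ContinuousAt.comp (f := fun ρ : ℝ => κ * (s - ρ * d)) (csq_continuousAt (by simpa using h2))
      (by fun_prop)
  have e3 : ContinuousAt (fun ρ : ℝ => (csq (c * (s - ρ)) / csq (κ * (s - ρ * d)) * k).re) 0 :=
    Complex.continuous_re.continuousAt.comp ((e1.div e2 (csq_ne _)).mul continuousAt_const)
  apply mem_nhdsWithin_of_mem_nhds
  apply e3.eventually (lt_mem_nhds _)
  simp [h]

lemma final_contra {α R : ℝ} (hα : 0 < α) (hα' : α ≤ Real.pi / 2) (hR : 0 < R) {T : Set ℂ}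
    (hT : IsPreconnected T) (h3 : (R : ℂ) * Complex.exp (α * I) ∈ T)
    (h1 : (R : ℂ) * Complex.exp ((-α : ℝ) * I) ∈ T) (h0 : (0 : ℂ) ∉ closure T) :
    ∀ᶠ ρ : ℝ in 𝓝[>] 0, ¬ ∃ q : ℂ → ℂ,
      ContinuousOn q (T ∪ (seg (Complex.exp (α * I)) R ∪ seg (Complex.exp ((-α : ℝ) * I)) R)) ∧
      ∀ z ∈ (T ∪ (seg (Complex.exp (α * I)) R ∪ seg (Complex.exp ((-α : ℝ) * I)) R)),
        q z ^ 2 * (z - ρ * Complex.exp ((-2 * α : ℝ) * I)) = z - ρ := by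
  have hpi := Real.pi_pos
  have hsin : 0 < Real.sin α := Real.sin_pos_of_pos_of_lt_pi hα (by linarith)
  have hsin2 : 0 ≤ Real.sin (2 * α) :=
    Real.sin_nonneg_of_nonneg_of_le_pi (by linarith) (by linarith)
  set κ : ℂ := Complex.exp ((α - Real.pi / 2 : ℝ) * I) with hκ
  set k3 : ℂ := Complex.exp ((α / 2 : ℝ) * I) with hk3
  set k1 : ℂ := Complex.exp (((α - Real.pi) / 2 : ℝ) * I) with hk1
  have hmI : -I = Complex.exp ((-(Real.pi / 2) : ℝ) * I) := by
    apply Complex.ext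
    · rw [expI_re]; simp
    · rw [expI_im]; simp
  have hI : I = Complex.exp (((Real.pi / 2) : ℝ) * I) := by
    apply Complex.ext
    · rw [expI_re]; simp
    · rw [expI_im]; simp
  have hRe : (R : ℂ) = Complex.exp (Real.log R) := by
    rw [← Complex.ofReal_exp, Real.exp_log hR]
  have hκ0 : κ ≠ 0 := Complex.exp_ne_zero _
  have hck3 : -I * k3 ^ 2 = κ := by
    rw [hmI, hk3, hκ, ← Complex.exp_nat_mul, ← Complex.exp_add]
    congr 1; push_cast; ring
  have hck1 : I * k1 ^ 2 = κ := by
    nth_rw 1 [hI]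
    rw [hk1, hκ, ← Complex.exp_nat_mul, ← Complex.exp_add]
    congr 1; push_cast; ring
  -- limits
  set s3 := (R : ℂ) * Complex.exp (α * I) with hs3
  set s1 := (R : ℂ) * Complex.exp ((-α : ℝ) * I) with hs1
  set d := Complex.exp ((-2 * α : ℝ) * I) with hd
  have a3 : -I * s3 = Complex.exp ((Real.log R : ℝ) + (α - Real.pi / 2 : ℝ) * I) := by
    rw [hmI, hs3, hRe, ← Complex.exp_add, ← Complex.exp_add]
    congr 1; push_cast; ring
  have b3 : κ * s3 = Complex.exp ((Real.log R : ℝ) + (2 * α - Real.pi / 2 : ℝ) * I) := by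
    rw [hκ, hs3, hRe, ← Complex.exp_add, ← Complex.exp_add]
    congr 1; push_cast; ring
  have a1 : I * s1 = Complex.exp ((Real.log R : ℝ) + (Real.pi / 2 - α : ℝ) * I) := by
    nth_rw 1 [hI]
    rw [hs1, hRe, ← Complex.exp_add, ← Complex.exp_add]
    congr 1; push_cast; ring
  have b1 : κ * s1 = Complex.exp ((Real.log R : ℝ) + (- (Real.pi / 2) : ℝ) * I) := by
    rw [hκ, hs1, hRe, ← Complex.exp_add, ← Complex.exp_add]
    congr 1; push_cast; ring
  have slit : ∀ θ : ℝ, -Real.pi < θ → θ < Real.pi →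
      Complex.exp ((Real.log R : ℝ) + θ * I) ∈ slitPlane := by
    intro θ h1 h2
    rw [Complex.exp_mem_slitPlane]
    have : (((Real.log R : ℝ) + θ * I : ℂ)).im = θ := by simp
    rw [this]
    rw [(toIocMod_eq_self _).2 ⟨h1, by linarith⟩]
    exact h2.ne
  have L3 := E_lim (c := -I) (κ := κ) (k := k3) (s := s3) (d := d)
    (by rw [a3]; exact slit _ (by linarith) (by linarith))
    (by rw [b3]; exact slit _ (by linarith) (by linarith))
    (by
      rw [csq_polar _ _ (by linarith) (by linarith) a3, csq_polar _ _ (by linarith) (by linarith) b3,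
        hk3, ← Complex.exp_sub, ← Complex.exp_add, ← Complex.exp_zero]
      congr 1; push_cast; ring)
  have L1 := E_lim (c := I) (κ := κ) (k := k1) (s := s1) (d := d)
    (by rw [a1]; exact slit _ (by linarith) (by linarith))
    (by rw [b1]; exact slit _ (by linarith) (by linarith))
    (by
      rw [csq_polar _ _ (by linarith) (by linarith) a1, csq_polar _ _ (by linarith) (by linarith) b1,
        hk1, ← Complex.exp_sub, ← Complex.exp_add, ← Complex.exp_zero]
      congr 1; push_cast; ring)
  obtain ⟨ε, hε, hball⟩ := Metric.isOpen_iff.1 isClosed_closure.isOpen_compl (0 : ℂ) h0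
  have hTε : ∀ z ∈ T, ε ≤ ‖z‖ := by
    intro z hz
    by_contra h
    exact hball (by simpa using h) (subset_closure hz)
  have small : ∀ᶠ ρ : ℝ in 𝓝[>] 0, ρ < ε / 4 :=
    mem_nhdsWithin_of_mem_nhds (Iio_mem_nhds (by linarith))
  filter_upwards [L3, L1, small, self_mem_nhdsWithin] with ρ L3 L1 hρε hρ
  have hρ : 0 < ρ := hρ
  rintro ⟨q, hqc, hq⟩
  -- on T
  have hdn : ‖d‖ = 1 := by rw [hd]; exact Complex.norm_exp_ofReal_mul_I _
  have hTre : ∀ z ∈ T, (q z).re ≠ 0 := by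
    intro z hz h
    have hqz := hq z (Or.inl hz)
    have hz1 := hTε z hz
    have nb : ‖(ρ : ℂ) * d‖ = ρ := by rw [norm_mul, hdn]; simp [abs_of_pos hρ]
    have hzb : ε - ρ ≤ ‖z - ρ * d‖ := by
      have := norm_sub_norm_le z (ρ * d)
      rw [nb] at this; linarith
    have hdiff : (q z ^ 2 - 1) * (z - ρ * d) = ρ * d - ρ := by linear_combination hqz
    have hn := congrArg norm hdiff
    rw [norm_mul] at hn
    have h5 : ‖(ρ : ℂ) * d - ρ‖ ≤ 2 * ρ := by
      have := norm_sub_le ((ρ : ℂ) * d) ρ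
      rw [nb] at this
      have h6 : ‖(ρ : ℂ)‖ = ρ := by simp [abs_of_pos hρ]
      rw [h6] at this; linarith
    have h7 : 1 ≤ ‖q z ^ 2 - 1‖ := by
      have h8 := Complex.abs_re_le_norm (q z ^ 2 - 1)
      have h9 : (q z ^ 2 - 1).re = - (q z).im ^ 2 - 1 := by
        simp [sq, h]
      rw [h9] at h8
      have := neg_le_abs (- (q z).im ^ 2 - 1)
      nlinarith [sq_nonneg (q z).im]
    nlinarith [norm_nonneg (z - ρ * d)]
  -- on the segments
  have hκb : (κ * (ρ * d)).re = - (ρ * Real.sin α) := by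
    have : κ * (ρ * d) = ρ * Complex.exp ((-(α + Real.pi / 2) : ℝ) * I) := by
      rw [hκ, hd, mul_left_comm, ← Complex.exp_add]
      congr 2; push_cast; ring
    rw [this, Complex.re_ofReal_mul, expI_re, Real.cos_neg, Real.cos_add_pi_div_two]; ring
  have hpos : 0 < ρ * Real.sin α := mul_pos hρ hsin
  have B3 := branch_on (seg_preconn (Complex.exp (α * I)) R) (a := ρ) (b := ρ * d) hκ0 hck3
    (by
      rintro _ ⟨x, ⟨hx0, hx1⟩, rfl⟩
      have im1 : (-I * ((x : ℂ) * Complex.exp (α * I) - ρ)).re = x * Real.sin α := by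
        simp [Complex.mul_re, Complex.mul_im, Complex.exp_ofReal_mul_I_im]
      have im2 : (-I * ((x : ℂ) * Complex.exp (α * I) - ρ)).im = ρ - x * Real.cos α := by
        simp [Complex.mul_re, Complex.mul_im, Complex.exp_ofReal_mul_I_re]
      rw [Complex.mem_slitPlane_iff]
      rcases hx0.eq_or_lt with h | h
      · right; rw [im2, ← h]; simp [hρ.ne']
      · left; rw [im1]; positivity)
    (by
      rintro _ ⟨x, ⟨hx0, hx1⟩, rfl⟩
      rw [Complex.mem_slitPlane_iff]
      left
      have : κ * ((x : ℂ) * Complex.exp (α * I)) = x * Complex.exp ((2 * α - Real.pi / 2 : ℝ) * I) := by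
        rw [hκ, mul_left_comm, ← Complex.exp_add]
        congr 2; push_cast; ring
      rw [mul_sub, Complex.sub_re, hκb, this, Complex.re_ofReal_mul, expI_re,
        Real.cos_sub_pi_div_two]
      have := mul_nonneg hx0 hsin2
      linarith)
    (hqc.mono (by intro z hz; exact Or.inr (Or.inl hz)))
    (fun z hz => hq z (Or.inr (Or.inl hz)))
  have B1 := branch_on (seg_preconn (Complex.exp ((-α : ℝ) * I)) R) (a := ρ) (b := ρ * d) hκ0 hck1
    (by
      rintro _ ⟨x, ⟨hx0, hx1⟩, rfl⟩
      have im1 : (I * ((x : ℂ) * Complex.exp ((-α : ℝ) * I) - ρ)).re = x * Real.sin α := by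
        rw [Complex.I_mul_re, Complex.sub_im, Complex.im_ofReal_mul, expI_im]; simp
      have im2 : (I * ((x : ℂ) * Complex.exp ((-α : ℝ) * I) - ρ)).im = x * Real.cos α - ρ := by
        rw [Complex.I_mul_im, Complex.sub_re, Complex.re_ofReal_mul, expI_re]; simp
      rw [Complex.mem_slitPlane_iff]
      rcases hx0.eq_or_lt with h | h
      · right; rw [im2, ← h]; simp [hρ.ne']
      · left; rw [im1]; positivity)
    (by
      rintro _ ⟨x, ⟨hx0, hx1⟩, rfl⟩
      rw [Complex.mem_slitPlane_iff]
      left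
      have : κ * ((x : ℂ) * Complex.exp ((-α : ℝ) * I)) = x * Complex.exp ((- (Real.pi / 2) : ℝ) * I) := by
        rw [hκ, mul_left_comm, ← Complex.exp_add]
        congr 2; push_cast; ring
      rw [mul_sub, Complex.sub_re, hκb, this, Complex.re_ofReal_mul, expI_re,
        Real.cos_neg, Real.cos_pi_div_two]
      linarith)
    (hqc.mono (by intro z hz; exact Or.inr (Or.inr hz)))
    (fun z hz => hq z (Or.inr (Or.inr hz)))
  have m3 : s3 ∈ seg (Complex.exp (α * I)) R := ⟨R, ⟨hR.le, le_rfl⟩, rfl⟩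
  have m1 : s1 ∈ seg (Complex.exp ((-α : ℝ) * I)) R := ⟨R, ⟨hR.le, le_rfl⟩, rfl⟩
  have z3 : (0 : ℂ) ∈ seg (Complex.exp (α * I)) R := ⟨0, ⟨le_rfl, hR.le⟩, by simp⟩
  have z1 : (0 : ℂ) ∈ seg (Complex.exp ((-α : ℝ) * I)) R := ⟨0, ⟨le_rfl, hR.le⟩, by simp⟩
  have hρe : (ρ : ℂ) = Complex.exp (Real.log ρ) := by
    rw [← Complex.ofReal_exp, Real.exp_log hρ]
  have key : csq (-I * (0 - ρ)) / csq (κ * (0 - ρ * d)) * k3 =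
      - (csq (I * (0 - ρ)) / csq (κ * (0 - ρ * d)) * k1) := by
    have e3 : -I * (0 - ρ) = Complex.exp ((Real.log ρ : ℝ) + (Real.pi / 2 : ℝ) * I) := by
      rw [Complex.exp_add, ← hρe, ← hI]; ring
    have e1 : I * (0 - ρ) = Complex.exp ((Real.log ρ : ℝ) + (-(Real.pi / 2) : ℝ) * I) := by
      rw [Complex.exp_add, ← hρe, ← hmI]; ring
    rw [csq_polar _ _ (by linarith) (by linarith) e3, csq_polar _ _ (by linarith) (by linarith) e1]
    have : Complex.exp ((Real.log ρ : ℝ) / 2 + (Real.pi / 2 : ℝ) / 2 * I) * k3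
        = - (Complex.exp ((Real.log ρ : ℝ) / 2 + (-(Real.pi / 2) : ℝ) / 2 * I) * k1) := by
      have hm1 : (-1 : ℂ) = Complex.exp (Real.pi * I) := by rw [Complex.exp_pi_mul_I]
      rw [← neg_one_mul, hm1, hk3, hk1, ← Complex.exp_add, ← Complex.exp_add, ← Complex.exp_add]
      congr 1; push_cast; ring
    linear_combination this / csq (κ * (0 - ρ * d))
  have kne : csq (I * (0 - ρ)) / csq (κ * (0 - ρ * d)) * k1 ≠ 0 :=
    mul_ne_zero (div_ne_zero (csq_ne _) (csq_ne _)) (Complex.exp_ne_zero _)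
  have self : ∀ x : ℂ, x ≠ 0 → x ≠ -x := by
    intro x hx h
    apply hx
    linear_combination h / 2
  have hrc : ContinuousOn (fun z => (q z).re) T :=
    Complex.continuous_re.comp_continuousOn (hqc.mono subset_union_left)
  have ivt : ∀ x ∈ T, ∀ y ∈ T, ¬ ((q x).re ≤ 0 ∧ 0 ≤ (q y).re) := by
    rintro x hx y hy h
    obtain ⟨z, hz, hz'⟩ := hT.intermediate_value hx hy hrc ⟨h.1, h.2⟩
    exact hTre z hz hz'
  rcases B3 with B3 | B3 <;> rcases B1 with B1 | B1
  · have := B3 0 z3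
    rw [B1 0 z1, key] at this
    exact self _ kne this
  · refine ivt s1 h1 s3 h3 ⟨?_, ?_⟩
    · rw [B1 s1 m1, Complex.neg_re]; linarith
    · rw [B3 s3 m3]; exact L3.le
  · refine ivt s3 h3 s1 h1 ⟨?_, ?_⟩
    · rw [B3 s3 m3, Complex.neg_re]; linarith
    · rw [B1 s1 m1]; exact L1.le
  · have := B3 0 z3
    rw [B1 0 z1, key, neg_neg] at this
    exact self _ kne this.symm

/-- Superlevel sets are connected. -/
lemma connect {Ω : Set ℂ} (hΩo : IsOpen Ω) (hΩb : Bornology.IsBounded Ω) {u : ℂ → ℝ}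
    (huc : ContinuousOn u (closure Ω)) (hmax : ∀ m ∈ Ω, ¬ IsLocalMax u m) {t : ℝ}
    (hfr : IsPreconnected {z ∈ frontier Ω | t < u z}) {s s' : ℂ} (hs : s ∈ Ω) (hs' : s' ∈ Ω)
    (hst : t < u s) (hst' : t < u s') :
    ∃ T : Set ℂ, IsPreconnected T ∧ s ∈ T ∧ s' ∈ T ∧ ∀ z ∈ T, z ∈ closure Ω ∧ t < u z := by
  set S : Set ℂ := {z ∈ closure Ω | t < u z} with hS
  have main : ∀ s ∈ Ω, t < u s →
      (connectedComponentIn S s ∩ {z ∈ frontier Ω | t < u z}).Nonempty := by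
    intro s hs hst
    by_contra hne
    have hsS : s ∈ S := ⟨subset_closure hs, hst⟩
    set C := connectedComponentIn S s with hC
    have hsC : s ∈ C := mem_connectedComponentIn hsS
    have hCS : C ⊆ S := connectedComponentIn_subset _ _
    have hCΩ : C ⊆ Ω := by
      intro z hz
      by_contra hzΩ
      refine hne ⟨z, hz, ?_, (hCS hz).2⟩
      rw [hΩo.frontier_eq]
      exact ⟨(hCS hz).1, hzΩ⟩
    have hcl : closure C ⊆ closure Ω := closure_mono hCΩ
    have hcomp : IsCompact (closure C) := (hΩb.subset hCΩ).isCompact_closure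
    obtain ⟨m, hm, hmm⟩ := hcomp.exists_isMaxOn ⟨s, subset_closure hsC⟩ (huc.mono hcl)
    have hmS : m ∈ S := ⟨hcl hm, hst.trans_le (hmm (subset_closure hsC))⟩
    have hmC : m ∈ C := by
      have h1 : IsPreconnected (insert m C) :=
        isPreconnected_connectedComponentIn.subset_closure (subset_insert _ _)
          (insert_subset hm subset_closure)
      exact h1.subset_connectedComponentIn (mem_insert_of_mem _ hsC)
        (insert_subset hmS hCS) (mem_insert _ _)
    have hmΩ := hCΩ hmC
    -- C is a neighbourhood of m
    have hopen : IsOpen (Ω ∩ u ⁻¹' Ioi t) :=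
      (huc.mono subset_closure).isOpen_inter_preimage hΩo isOpen_Ioi
    obtain ⟨r, hr, hball⟩ := Metric.isOpen_iff.1 hopen m ⟨hmΩ, hmS.2⟩
    have hbC : ball m r ⊆ C := by
      have hb : IsPreconnected (ball m r ∪ C) :=
        (convex_ball m r).isPreconnected.union m (mem_ball_self hr) hmC
          isPreconnected_connectedComponentIn
      have := hb.subset_connectedComponentIn (F := S) (x := s) (Or.inr hsC) (by
        rintro z (hz | hz)
        · exact ⟨subset_closure (hball hz).1, (hball hz).2⟩
        · exact hCS hz)
      exact fun z hz => this (Or.inl hz)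
    apply hmax m hmΩ
    filter_upwards [ball_mem_nhds m hr] with z hz
    exact hmm (subset_closure (hbC hz))
  obtain ⟨x, hx, hxf⟩ := main s hs hst
  obtain ⟨y, hy, hyf⟩ := main s' hs' hst'
  refine ⟨(connectedComponentIn S s ∪ {z ∈ frontier Ω | t < u z}) ∪ connectedComponentIn S s',
    ?_, Or.inl (Or.inl (mem_connectedComponentIn ⟨subset_closure hs, hst⟩)),
    Or.inr (mem_connectedComponentIn ⟨subset_closure hs', hst'⟩), ?_⟩
  · exact (isPreconnected_connectedComponentIn.union x hx hxf hfr).union y (Or.inr hyf) hy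
      isPreconnected_connectedComponentIn
  · rintro z ((hz | hz) | hz)
    · exact connectedComponentIn_subset S _ hz
    · exact ⟨frontier_subset_closure hz.1, hz.2⟩
    · exact connectedComponentIn_subset S _ hz

lemma bdry_preconn {Ω : Set ℂ} {γ : ℂ → ℂ}
    (hγ : ContinuousOn γ (Metric.sphere (0 : ℂ) 1))
    (hΓ : frontier Ω = γ '' Metric.sphere (0 : ℂ) 1) {φ : ℝ} {u : ℂ → ℝ}
    (hub : ∀ θ : ℝ, u (γ (Complex.exp (θ * Complex.I))) = Real.cos (θ - φ)) (t : ℝ) :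
    IsPreconnected {z ∈ frontier Ω | t < u z} := by
  have hpi := Real.pi_pos
  have : {z ∈ frontier Ω | t < u z} =
      (fun x : ℝ => γ (Complex.exp ((x + φ : ℝ) * I))) '' {x ∈ Icc (-Real.pi) Real.pi | t < Real.cos x} := by
    ext z
    constructor
    · rintro ⟨hz, hzt⟩
      rw [hΓ] at hz
      obtain ⟨w, hw, rfl⟩ := hz
      have hw1 : ‖w‖ = 1 := by simpa using hw
      set w' := w * Complex.exp ((-φ : ℝ) * I) with hw'
      have hn : ‖w'‖ = 1 := by rw [hw', norm_mul, hw1, Complex.norm_exp_ofReal_mul_I, one_mul]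
      have e1 : Complex.exp (arg w' * I) = w' := by
        have := Complex.norm_mul_exp_arg_mul_I w'
        rwa [hn, Complex.ofReal_one, one_mul] at this
      have e2 : Complex.exp ((arg w' + φ : ℝ) * I) = w := by
        rw [Complex.ofReal_add, add_mul, Complex.exp_add, e1, hw', mul_assoc, ← Complex.exp_add]
        simp
      refine ⟨arg w', ⟨⟨(Complex.neg_pi_lt_arg _).le, Complex.arg_le_pi _⟩, ?_⟩, by simp only [e2]⟩
      have := hub (arg w' + φ)
      rw [e2, add_sub_cancel_right] at this
      rwa [← this]
    · rintro ⟨x, ⟨hx, hxt⟩, rfl⟩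
      refine ⟨?_, ?_⟩
      · rw [hΓ]
        exact ⟨_, by simp [Complex.norm_exp_ofReal_mul_I, -Complex.ofReal_add], rfl⟩
      · simp only [hub]
        rwa [add_sub_cancel_right]
  rw [this]
  apply IsPreconnected.image
  · apply OrdConnected.isPreconnected
    constructor
    rintro x ⟨hx, hxt⟩ y ⟨hy, hyt⟩ z ⟨hz1, hz2⟩
    refine ⟨⟨hx.1.trans hz1, hz2.trans hy.2⟩, ?_⟩
    rcases le_total 0 z with h | h
    · exact hyt.trans_le (Real.cos_le_cos_of_nonneg_of_le_pi h hy.2 hz2)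
    · rw [← Real.cos_neg] at hxt ⊢
      exact hxt.trans_le (Real.cos_le_cos_of_nonneg_of_le_pi (by linarith) (by linarith [hx.1]) (by linarith))
  · apply hγ.comp (by fun_prop)
    intro x hx
    simp [Complex.norm_exp_ofReal_mul_I, -Complex.ofReal_add]

open InnerProductSpace in
lemma harm {u : ℂ → ℝ} {Ω : Set ℂ} (hΩo : IsOpen Ω) (h : HarmonicOnSet u Ω) :
    HarmonicOnNhd u Ω := by
  have hC : ∀ z ∈ Ω, ContDiffAt ℝ 2 u z := fun z hz => h.1.contDiffAt (hΩo.mem_nhds hz)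
  intro x hx
  refine ⟨hC x hx, ?_⟩
  filter_upwards [hΩo.mem_nhds hx] with z hz
  have hd : DifferentiableAt ℝ (fderiv ℝ u) z :=
    ((hC z hz).fderiv_right (m := 1) (by norm_num)).differentiableAt (by norm_num)
  have := h.2 z hz
  rw [laplacian_eq_iteratedFDeriv_complexPlane]
  simp only [iteratedFDeriv_two_apply, Pi.zero_apply]
  rw [fderiv_clm_apply hd (differentiableAt_const _), fderiv_clm_apply hd (differentiableAt_const _)] at this
  simpa using this

open InnerProductSpace in
lemma local_re {u : ℂ → ℝ} {p : ℂ} (h : HarmonicAt u p) :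
    ∃ F : ℂ → ℂ, AnalyticAt ℂ F p ∧ ∀ᶠ z in 𝓝 p, (F z).re = u z := by
  obtain ⟨ε, h₁ε, h₂ε⟩ := isOpen_iff.1 (isOpen_setOfPred_harmonicAt (f := u)) p h
  obtain ⟨F, h₁F, h₂F⟩ := InnerProductSpace.HarmonicOnNhd.exists_analyticOnNhd_ball_re_eq
    (fun _ hy ↦ h₂ε hy)
  exact ⟨F, h₁F p (mem_ball_self h₁ε), eventually_of_mem (ball_mem_nhds p h₁ε) h₂F⟩

open InnerProductSpace in
lemma no_max {u : ℂ → ℝ} {p : ℂ} (h : HarmonicAt u p) (hnc : ¬ ∀ᶠ z in 𝓝 p, u z = u p) :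
    ¬ IsLocalMax u p := by
  intro hm
  obtain ⟨F, hF, hFu⟩ := local_re h
  have hp : (F p).re = u p := hFu.self_of_nhds
  rcases hF.eventually_constant_or_nhds_le_map_nhds with hc | hc
  · apply hnc
    filter_upwards [hc, hFu] with z h1 h2
    rw [← h2, h1, hp]
  · have h1 : ∀ᶠ w in map F (𝓝 p), w.re ≤ (F p).re := by
      rw [eventually_map]
      filter_upwards [hFu, hm] with z h1 h2
      rw [h1, hp]; exact h2
    have h2 := hc h1
    have h3 : Tendsto (fun t : ℝ => F p + t) (𝓝[>] 0) (𝓝 (F p)) := by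
      have : ContinuousAt (fun t : ℝ => F p + t) 0 := by fun_prop
      have := this.tendsto.mono_left (nhdsWithin_le_nhds (s := Ioi 0))
      simpa using this
    obtain ⟨t, ht, ht0⟩ := ((h3.eventually h2).and self_mem_nhdsWithin).exists
    have ht0 : 0 < t := ht0
    simp at ht
    linarith

open InnerProductSpace in
lemma local_sectors {u : ℂ → ℝ} {p : ℂ} (h : HarmonicAt u p) (hnc : ¬ ∀ᶠ z in 𝓝 p, u z = u p)
    (hcr : fderiv ℝ u p = 0) : ∃ n : ℕ, 2 ≤ n ∧ ∃ e : ℂ, e ≠ 0 ∧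
      (∀ w : ℂ, w ^ n = -1 → ∀ᶠ t : ℝ in 𝓝[>] 0, u p < u (p + e * (t * w))) ∧
      (∀ w : ℂ, w ^ n = 1 → ∀ᶠ t : ℝ in 𝓝[>] 0, u (p + e * (t * w)) < u p) := by
  obtain ⟨F, hF, hFu⟩ := local_re h
  have hp : (F p).re = u p := hFu.self_of_nhds
  have hG : AnalyticAt ℂ (fun z => F z - F p) p := hF.sub analyticAt_const
  have hnz : ¬ ∀ᶠ z in 𝓝 p, F z - F p = 0 := by
    intro hc
    apply hnc
    filter_upwards [hc, hFu] with z h1 h2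
    rw [← h2, sub_eq_zero.1 h1, hp]
  obtain ⟨n, g, hg, hg0, hgF⟩ := hG.exists_eventuallyEq_pow_smul_nonzero_iff.2 hnz
  have hd0 : deriv F p = 0 := by
    have h1 : HasFDerivAt F ((ContinuousLinearMap.toSpanSingleton ℂ (deriv F p)).restrictScalars ℝ) p :=
      hF.differentiableAt.hasDerivAt.hasFDerivAt.restrictScalars ℝ
    have h2 := (Complex.reCLM.hasFDerivAt (x := F p)).comp p h1
    have h3 : HasFDerivAt u _ p := h2.congr_of_eventuallyEq (by
      filter_upwards [hFu] with z hz
      simp [hz])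
    have h4 := h3.fderiv
    rw [hcr] at h4
    have h5 := DFunLike.congr_fun h4 1
    have h6 := DFunLike.congr_fun h4 I
    simp at h5 h6
    exact Complex.ext h5.symm h6
  have hn0 : n ≠ 0 := by
    rintro rfl
    have := hgF.self_of_nhds
    simp at this
    exact hg0 this.symm
  have hn1 : n ≠ 1 := by
    rintro rfl
    have h1 : HasDerivAt (fun z => F z - F p) (deriv F p) p :=
      hF.differentiableAt.hasDerivAt.sub_const _
    have h2 : HasDerivAt (fun z => (z - p) * g z) (1 * g p + (p - p) * deriv g p) p :=
      ((hasDerivAt_id p).sub_const p).mul hg.differentiableAt.hasDerivAt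
    have h3 := h1.unique (h2.congr_of_eventuallyEq (by
      filter_upwards [hgF] with z hz
      simpa using hz))
    rw [hd0] at h3
    simp at h3
    exact hg0 h3.symm
  obtain ⟨e, he⟩ := IsAlgClosed.exists_pow_nat_eq (-(g p)⁻¹) (Nat.pos_of_ne_zero hn0)
  have he0 : e ≠ 0 := by
    rintro rfl
    rw [zero_pow hn0] at he
    exact hg0 (by simpa using he.symm)
  have heg : e ^ n * g p = -1 := by rw [he]; field_simp
  have key : ∀ w : ℂ, Tendsto (fun t : ℝ => (e ^ n * w ^ n * g (p + e * (t * w))).re) (𝓝[>] 0)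
      (𝓝 (-(w ^ n)).re) ∧ ∀ᶠ t : ℝ in 𝓝[>] 0, u (p + e * (t * w)) - u p =
        t ^ n * (e ^ n * w ^ n * g (p + e * (t * w))).re := by
    intro w
    have hl : ContinuousAt (fun t : ℝ => p + e * (t * w)) 0 := by fun_prop
    have hl' : Tendsto (fun t : ℝ => p + e * (t * w)) (𝓝[>] 0) (𝓝 p) := by
      have := hl.tendsto.mono_left (nhdsWithin_le_nhds (s := Ioi 0))
      simpa using this
    constructor
    · have h1 := hg.continuousAt.tendsto.comp hl'
      have h2 := (h1.const_mul (e ^ n * w ^ n))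
      have h3 := (Complex.continuous_re.tendsto _).comp h2
      convert! h3 using 3
      linear_combination -w ^ n * heg
    · filter_upwards [hl'.eventually hFu, hl'.eventually hgF] with t h1 h2
      rw [← h1, ← hp, ← Complex.sub_re, h2, ← Complex.re_ofReal_mul]
      congr 1
      simp only [smul_eq_mul, add_sub_cancel_left, mul_pow]
      push_cast; ring
  refine ⟨n, by omega, e, he0, fun w hw => ?_, fun w hw => ?_⟩
  · obtain ⟨k1, k2⟩ := key w
    rw [hw] at k1 k2
    filter_upwards [k2, k1.eventually (Ioi_mem_nhds (a := 0) (by simp)), self_mem_nhdsWithin] with t h1 h2 h3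
    have : 0 < t ^ n := pow_pos h3 n
    nlinarith [mul_pos this h2]
  · obtain ⟨k1, k2⟩ := key w
    rw [hw] at k1 k2
    filter_upwards [k2, k1.eventually (eventually_lt_nhds (b := 0) (by simp)), self_mem_nhdsWithin] with t h1 h2 h3
    have : 0 < t ^ n := pow_pos h3 n
    nlinarith [mul_neg_of_pos_of_neg this h2]


lemma nonconst {Ω : Set ℂ} (hΩc : IsPreconnected Ω) {u : ℂ → ℝ}
    (huc : ContinuousOn u (closure Ω)) (hu : InnerProductSpace.HarmonicOnNhd u Ω) {x y : ℂ}
    (hx : x ∈ closure Ω) (hy : y ∈ closure Ω) (hxy : u x ≠ u y) :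
    ∀ p ∈ Ω, ¬ ∀ᶠ z in 𝓝 p, u z = u p := by
  intro p hp hev
  have ha : AnalyticOnNhd ℝ u Ω := fun z hz => HarmonicAt.analyticAt (hu z hz)
  have hc : EqOn u (fun _ => u p) Ω :=
    ha.eqOn_of_preconnected_of_eventuallyEq analyticOnNhd_const hΩc hp hev
  have h2 : EqOn u (fun _ => u p) (closure Ω) :=
    hc.of_subset_closure huc continuousOn_const subset_closure subset_rfl
  exact hxy ((h2 hx).trans (h2 hy).symm)

lemma main_aux {Ω : Set ℂ} (hΩo : IsOpen Ω) (hΩb : Bornology.IsBounded Ω)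
    (hΩc : IsPreconnected Ω) {γ : ℂ → ℂ}
    (hγ : ContinuousOn γ (Metric.sphere (0 : ℂ) 1))
    (hΓ : frontier Ω = γ '' Metric.sphere (0 : ℂ) 1) {φ : ℝ} {u : ℂ → ℝ}
    (huc : ContinuousOn u (closure Ω)) (hu : InnerProductSpace.HarmonicOnNhd u Ω)
    (hub : ∀ θ : ℝ, u (γ (Complex.exp (θ * Complex.I))) = Real.cos (θ - φ)) {p : ℂ}
    (hp : p ∈ Ω) : fderiv ℝ u p ≠ 0 := by
  intro hcr
  have hmem : ∀ θ : ℝ, γ (Complex.exp (θ * I)) ∈ closure Ω := fun θ =>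
    frontier_subset_closure (by
      rw [hΓ]; exact ⟨_, by simp [Complex.norm_exp_ofReal_mul_I], rfl⟩)
  have hnc := nonconst hΩc huc hu (hmem φ) (hmem (φ + Real.pi)) (by
    rw [hub, hub]; simp; norm_num)
  have hun : InnerProductSpace.HarmonicOnNhd (-u) Ω := hu.neg
  have hmax : ∀ m ∈ Ω, ¬ IsLocalMax u m := fun m hm => no_max (hu m hm) (hnc m hm)
  have hmax' : ∀ m ∈ Ω, ¬ IsLocalMax (-u) m := fun m hm => no_max (hun m hm) (by
    simpa using hnc m hm)
  have hfr := bdry_preconn hγ hΓ hub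
  have hfr' := bdry_preconn (u := -u) (φ := φ + Real.pi) hγ hΓ (by
    intro θ
    rw [Pi.neg_apply, hub, ← sub_sub, Real.cos_sub_pi])
  obtain ⟨n, hn, e, he, hpos, hneg⟩ := local_sectors (hu p hp) (hnc p hp) hcr
  have hpi := Real.pi_pos
  have hn0 : (0 : ℝ) < n := by positivity
  have hn0' : (n : ℂ) ≠ 0 := by exact_mod_cast hn0.ne'
  have hn2 : (2 : ℝ) ≤ n := by exact_mod_cast hn
  set α : ℝ := Real.pi / n with hα
  have hα0 : 0 < α := by positivity
  have hα2 : α ≤ Real.pi / 2 := by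
    rw [hα]; gcongr
  have w3 : Complex.exp (α * I) ^ n = -1 := by
    rw [← Complex.exp_nat_mul, ← Complex.exp_pi_mul_I, hα]
    congr 1; push_cast; field_simp
  have w1 : Complex.exp ((-α : ℝ) * I) ^ n = -1 := by
    have : Complex.exp ((-α : ℝ) * I) = (Complex.exp (α * I))⁻¹ := by
      rw [← Complex.exp_neg]; congr 1; push_cast; ring
    rw [this, inv_pow, w3]; norm_num
  have w4 : Complex.exp ((-2 * α : ℝ) * I) ^ n = 1 := by
    have : Complex.exp ((-2 * α : ℝ) * I) = Complex.exp ((-α : ℝ) * I) ^ 2 := by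
      rw [← Complex.exp_nat_mul]; congr 1; push_cast; ring
    rw [this, ← pow_mul, mul_comm 2 n, pow_mul, w1]; norm_num
  have hin : ∀ w : ℂ, ∀ᶠ t : ℝ in 𝓝[>] 0, p + e * (t * w) ∈ Ω := by
    intro w
    have hl : ContinuousAt (fun t : ℝ => p + e * (t * w)) 0 := by fun_prop
    exact mem_nhdsWithin_of_mem_nhds (hl.preimage_mem_nhds (hΩo.mem_nhds (by simpa using hp)))
  have ev := (((hpos _ w3).and (hpos _ w1)).and ((hin (Complex.exp (α * I))).and
    (hin (Complex.exp ((-α : ℝ) * I)))))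
  obtain ⟨R, hR, hRs⟩ := mem_nhdsGT_iff_exists_Ioc_subset.1 ev
  have hR : 0 < R := hR
  have hRR := hRs ⟨hR, le_rfl⟩
  obtain ⟨⟨g3, g1⟩, i3, i1⟩ := hRR
  obtain ⟨c', hc, hc'⟩ := exists_between (lt_min g3 g1)
  obtain ⟨T, hT, hT3, hT1, hTs⟩ := connect hΩo hΩb huc hmax (hfr c') i3 i1
    (hc'.trans_le (min_le_left _ _)) (hc'.trans_le (min_le_right _ _))
  set A : ℂ → ℂ := fun ζ => p + e * ζ with hA
  set B : ℂ → ℂ := fun z => (z - p) / e with hB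
  have hAc : Continuous A := by fun_prop
  have hBc : Continuous B := by fun_prop
  have hBA : ∀ ζ, B (A ζ) = ζ := by intro ζ; simp [hA, hB]; field_simp
  have hAB : ∀ z, A (B z) = z := by intro z; simp [hA, hB]; field_simp; ring
  have hclosed : ∀ r : ℝ, IsClosed {ζ : ℂ | A ζ ∈ closure Ω ∧ r ≤ u (A ζ)} := by
    intro r
    have h1 : IsClosed (closure Ω ∩ u ⁻¹' Ici r) :=
      huc.preimage_isClosed_of_isClosed isClosed_closure isClosed_Ici
    exact h1.preimage hAc
  have h0 : (0 : ℂ) ∉ closure (B '' T) := by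
    intro h
    have h2 : B '' T ⊆ {ζ : ℂ | A ζ ∈ closure Ω ∧ c' ≤ u (A ζ)} := by
      rintro _ ⟨z, hz, rfl⟩
      have := hTs z hz
      refine ⟨?_, ?_⟩
      · rw [hAB]; exact this.1
      · rw [hAB]; exact this.2.le
    have h3 := closure_minimal h2 (hclosed c') h
    have h4 : c' ≤ u (A 0) := h3.2
    simp [hA] at h4
    linarith
  have fin := final_contra hα0 hα2 hR (hT.image B hBc.continuousOn)
    ⟨_, hT3, hBA _⟩ ⟨_, hT1, hBA _⟩ h0
  obtain ⟨ρ, hfin, n2, n4, j2, j4⟩ := (fin.and ((hneg 1 (one_pow n)).and ((hneg _ w4).and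
    ((hin 1).and (hin (Complex.exp ((-2 * α : ℝ) * I))))))).exists
  apply hfin
  rw [mul_one] at n2 j2
  obtain ⟨S, hS, hS2, hS4, hSs⟩ := connect hΩo hΩb huc.neg hmax' (hfr' (- u p)) j2 j4
    (neg_lt_neg n2) (neg_lt_neg n4)
  refine exists_sqrt_ratio (hclosed (u p)) ?_ (hS.image B hBc.continuousOn) ?_
    ⟨_, hS2, hBA _⟩ ⟨_, hS4, hBA _⟩
  · rintro ζ (⟨z, hz, rfl⟩ | ⟨x, hx, rfl⟩ | ⟨x, hx, rfl⟩)
    · have := hTs z hz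
      refine ⟨?_, ?_⟩
      · rw [hAB]; exact this.1
      · rw [hAB]; exact (hc.trans this.2).le
    · rcases hx.1.eq_or_lt with h | h
      · subst h
        simpa [hA] using subset_closure hp
      · have := hRs ⟨h, hx.2⟩
        exact ⟨subset_closure this.2.1, this.1.1.le⟩
    · rcases hx.1.eq_or_lt with h | h
      · subst h
        simpa [hA] using subset_closure hp
      · have := hRs ⟨h, hx.2⟩
        exact ⟨subset_closure this.2.2, this.1.2.le⟩
  · rintro _ ⟨z, hz, rfl⟩ ⟨h1, h2⟩
    rw [hAB] at h2
    have := (hSs z hz).2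
    have : - u p < - u z := this
    linarith

end Helpers

theorem stmt_5 (Ω : Set ℂ) (hΩo : IsOpen Ω) (hΩb : Bornology.IsBounded Ω)
    (hΩsc : SimplyConnectedSpace Ω)
    (γ : ℂ → ℂ) (hγinj : Set.InjOn γ (Metric.sphere (0 : ℂ) 1))
    (hγC2 : ContDiffOn ℝ 2 γ (Metric.sphere (0 : ℂ) 1))
    (hΓ : frontier Ω = γ '' Metric.sphere (0 : ℂ) 1)
    (φ : ℝ) (hφ : φ ∈ Set.Ico (0 : ℝ) (2 * Real.pi))
    (u : ℂ → ℝ) (huc : ContinuousOn u (closure Ω)) (huh : HarmonicOnSet u Ω)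
    (hub : ∀ θ : ℝ, u (γ (Complex.exp (θ * Complex.I))) = Real.cos (θ - φ)) :
    ∀ p ∈ Ω, gradient u p ≠ 0 := by
  intro p hp hg
  have hΩc : IsPreconnected Ω := isPreconnected_iff_preconnectedSpace.2 inferInstance
  refine main_aux hΩo hΩb hΩc hγC2.continuousOn hΓ huc (harm hΩo huh) hub hp ?_
  simpa [gradient] using hg
end
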